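/- arXiv:2110.08541 — 2 statements merged into one kernel-verified Lean document; each statement's English description precedes it below -/
import Mathlib

section
/- Let S ⊂ S² be a simply connected domain with smooth boundary and (spherical) area θ, and let β ∈ C¹(S¹, S²) be a simple, positively oriented parametrization of its boundary ∂S, regarded as a closed curve β : [0,1] → S² with β(0) = β(1). Then the parallel transport around β is rotation by θ in the tangent plane at β(0): for every v ∈ ℝ³ with v · β(0) = 0, Π_β v = R_{β(0)}^{(θ)} v = v cos θ + (β(0) × v) sin θ. -/
open MeasureTheory Set Filter Matrix
open scoped RealInnerProductSpace Topology ENNReal NNReal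

noncomputable section

/-- Euclidean 3-space. -/
abbrev E3 : Type := EuclideanSpace ℝ (Fin 3)

/-- Cross product on `ℝ³`. -/
def cross3 (v w : E3) : E3 :=
  (WithLp.equiv 2 (Fin 3 → ℝ)).symm
    ![v 1 * w 2 - v 2 * w 1, v 2 * w 0 - v 0 * w 2, v 0 * w 1 - v 1 * w 0]

/-- The `i`-th row of a 3×3 matrix, as a vector in `ℝ³`; for `r ∈ SO(3)` this is `rᵀ eᵢ`. -/
def row3 (M : Matrix (Fin 3) (Fin 3) ℝ) (i : Fin 3) : E3 :=
  (WithLp.equiv 2 (Fin 3 → ℝ)).symm (M i)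

/-- The set of rotation matrices. -/
def SO3 : Set (Matrix (Fin 3) (Fin 3) ℝ) :=
  {M | M * Mᵀ = 1 ∧ M.det = 1}

/-- Lebesgue measure restricted to the unit interval `I = (0,1)`. -/
def muI : Measure ℝ := volume.restrict (Set.Ioo 0 1)

/-- `f` is absolutely continuous on `[a,b]` with (a.e.) derivative `f'` (fundamental theorem of
calculus form); this encodes `f ∈ W^{1,1}((a,b))` via its continuous representative. -/
def FTCOn (f f' : ℝ → E3) (a b : ℝ) : Prop :=
  IntervalIntegrable f' volume a b ∧
  ∀ t ∈ Set.Icc a b, f t = f a + ∫ s in a..t, f' s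

/-- `V` is the parallel transport of `v` along the spherical curve `β` (with derivative `β'`)
on `[a,b]`: the absolutely continuous solution of `V' = -(V·β')β`, `V a = v`, in integral form.
`V t` is the quantity denoted `Π_{β|_(a,t)} v`. -/
def IsParTrans (β β' : ℝ → E3) (a b : ℝ) (v : E3) (V : ℝ → E3) : Prop :=
  V a = v ∧
  IntervalIntegrable (fun s => ⟪V s, β' s⟫ • β s) volume a b ∧
  ∀ t ∈ Set.Icc a b, V t = v - ∫ s in a..t, ⟪V s, β' s⟫ • β s


lemma inner3 (x y : E3) : ⟪x, y⟫ = x 0 * y 0 + x 1 * y 1 + x 2 * y 2 := by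
  simp [PiLp.inner_apply, Fin.sum_univ_three]; ring

lemma cross3_0 (x y : E3) : cross3 x y 0 = x 1 * y 2 - x 2 * y 1 := rfl
lemma cross3_1 (x y : E3) : cross3 x y 1 = x 2 * y 0 - x 0 * y 2 := rfl
lemma cross3_2 (x y : E3) : cross3 x y 2 = x 0 * y 1 - x 1 * y 0 := rfl

lemma E3_ext {x y : E3} (h0 : x 0 = y 0) (h1 : x 1 = y 1) (h2 : x 2 = y 2) : x = y := by
  ext i; fin_cases i <;> assumption

lemma cross3_add_right (x y z : E3) : cross3 x (y + z) = cross3 x y + cross3 x z := by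
  apply E3_ext <;> simp [cross3_0, cross3_1, cross3_2] <;> ring

lemma cross3_smul_right (x y : E3) (c : ℝ) : cross3 x (c • y) = c • cross3 x y := by
  apply E3_ext <;> simp [cross3_0, cross3_1, cross3_2] <;> ring

lemma cross3_add_left (x y z : E3) : cross3 (x + y) z = cross3 x z + cross3 y z := by
  apply E3_ext <;> simp [cross3_0, cross3_1, cross3_2] <;> ring

lemma cross3_smul_left (x y : E3) (c : ℝ) : cross3 (c • x) y = c • cross3 x y := by
  apply E3_ext <;> simp [cross3_0, cross3_1, cross3_2] <;> ring

lemma cross3_self (x : E3) : cross3 x x = 0 := by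
  apply E3_ext <;> simp [cross3_0, cross3_1, cross3_2] <;> ring

lemma inner_cross_left (x y : E3) : ⟪x, cross3 x y⟫ = 0 := by
  simp [inner3, cross3_0, cross3_1, cross3_2]; ring

lemma inner_cross_right (x y : E3) : ⟪y, cross3 x y⟫ = 0 := by
  simp [inner3, cross3_0, cross3_1, cross3_2]; ring

lemma inner_cross_cyc (x y z : E3) : ⟪x, cross3 y z⟫ = ⟪cross3 x y, z⟫ := by
  simp [inner3, cross3_0, cross3_1, cross3_2]; ring

/-- Gram expansion of `[a,b,c] (p × u)`. -/
lemma gram_cross (a b c p u : E3) :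
    ⟪a, cross3 b c⟫ • cross3 p u =
      (⟪b, p⟫ * ⟪c, u⟫ - ⟪c, p⟫ * ⟪b, u⟫) • a
      - (⟪a, p⟫ * ⟪c, u⟫ - ⟪c, p⟫ * ⟪a, u⟫) • b
      + (⟪a, p⟫ * ⟪b, u⟫ - ⟪b, p⟫ * ⟪a, u⟫) • c := by
  apply E3_ext <;> simp [inner3, cross3_0, cross3_1, cross3_2] <;> ring

/-- Dual-basis expansion. -/
lemma dual_expand (a b c x : E3) :
    ⟪a, cross3 b c⟫ • x = ⟪x, a⟫ • cross3 b c + ⟪x, b⟫ • cross3 c a + ⟪x, c⟫ • cross3 a b := by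
  apply E3_ext <;> simp [inner3, cross3_0, cross3_1, cross3_2] <;> ring

lemma cross3_norm_sq (x y : E3) : ‖cross3 x y‖ ^ 2 = ‖x‖ ^ 2 * ‖y‖ ^ 2 - ⟪x, y⟫ ^ 2 := by
  simp only [← real_inner_self_eq_norm_sq]
  simp only [inner3, cross3_0, cross3_1, cross3_2]; ring

/-- The cross product as a continuous linear map in the second argument. -/
def crossL (p : E3) : E3 →L[ℝ] E3 :=
  LinearMap.toContinuousLinearMap
    { toFun := cross3 p
      map_add' := cross3_add_right p
      map_smul' := fun c y => cross3_smul_right p y c }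

lemma crossL_apply (p x : E3) : crossL p x = cross3 p x := rfl

lemma continuous_cross3 {X : Type*} [TopologicalSpace X] {f g : X → E3}
    (hf : Continuous f) (hg : Continuous g) : Continuous fun x => cross3 (f x) (g x) := by
  unfold cross3
  refine (PiLp.continuous_toLp 2 _).comp ?_
  refine continuous_pi fun i => ?_
  have h : ∀ i : Fin 3, Continuous fun x => f x i := fun i => by fun_prop
  have h' : ∀ i : Fin 3, Continuous fun x => g x i := fun i => by fun_prop
  fin_cases i <;> simp <;> exact ((h _).mul (h' _)).sub ((h _).mul (h' _))

/-- The transport map to a fixed tangent plane intertwines the two rotations by a right angle. -/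
lemma transport_cross (p b V : E3) (hp : ‖p‖ = 1) (hb : ‖b‖ = 1) (hV : ⟪V, b⟫ = 0)
    (hg : 1 + ⟪p, b⟫ ≠ 0) :
    cross3 b V - (⟪cross3 b V, p⟫ / (1 + ⟪p, b⟫)) • (p + b) =
      cross3 p (V - (⟪V, p⟫ / (1 + ⟪p, b⟫)) • (p + b)) := by
  have hpp : ⟪p, p⟫ = 1 := by rw [real_inner_self_eq_norm_sq, hp]; norm_num
  have hbb : ⟪b, b⟫ = 1 := by rw [real_inner_self_eq_norm_sq, hb]; norm_num
  have e1 := dual_expand p b V p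
  have e2 := dual_expand p b V b
  rw [hpp, real_inner_comm V p] at e1
  rw [hbb, real_inner_comm V b, hV, real_inner_comm p b] at e2
  have e3 : cross3 V p = - cross3 p V := by
    apply E3_ext <;> simp [cross3_0, cross3_1, cross3_2] <;> ring
  have e4 : cross3 p (V - (⟪V, p⟫ / (1 + ⟪p, b⟫)) • (p + b)) =
      cross3 p V - (⟪V, p⟫ / (1 + ⟪p, b⟫)) • cross3 p b := by
    apply E3_ext <;> simp [cross3_0, cross3_1, cross3_2] <;> ring
  rw [e4, real_inner_comm p (cross3 b V)]
  rw [e3] at e1 e2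
  set g := 1 + ⟪p, b⟫ with hgd
  have hpb : ⟪p, b⟫ = g - 1 := by rw [hgd]; ring
  rw [hpb] at e1 e2
  have e5 : ⟪p, cross3 b V⟫ • (p + b) = g • cross3 b V - g • cross3 p V + ⟪V, p⟫ • cross3 p b := by
    rw [smul_add, e1, e2]; module
  have e6 : (⟪p, cross3 b V⟫ / g) • (p + b) = cross3 b V - cross3 p V + (⟪V, p⟫ / g) • cross3 p b := by
    rw [div_eq_inv_mul, mul_smul, e5, smul_add, smul_sub, smul_smul, smul_smul,
      inv_mul_cancel₀ hg, one_smul, one_smul, smul_smul, ← div_eq_inv_mul]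
  rw [e6]; module

lemma inner_deriv_zero (β : ℝ → E3) (hβ : ContDiff ℝ 1 β)
    (hsph : ∀ t ∈ Set.Icc (0:ℝ) 1, ‖β t‖ = 1) : ∀ t ∈ Set.Icc (0:ℝ) 1, ⟪β t, deriv β t⟫ = 0 := by
  intro t ht
  have hd : HasDerivAt β (deriv β t) t := (hβ.differentiable (by norm_num) t).hasDerivAt
  have h1 := (hd.inner ℝ hd).hasDerivWithinAt (s := Set.Icc 0 1)
  have h2 : HasDerivWithinAt (fun t => ⟪β t, β t⟫) (0:ℝ) (Set.Icc 0 1) t := by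
    refine (hasDerivWithinAt_const t (Set.Icc 0 1) (1:ℝ)).congr ?_ ?_
    · intro s hs; rw [real_inner_self_eq_norm_sq, hsph s hs]; norm_num
    · rw [real_inner_self_eq_norm_sq, hsph t ht]; norm_num
  have h3 := (uniqueDiffOn_Icc (zero_lt_one' ℝ) t ht).eq_deriv _ h1 h2
  rw [real_inner_comm (β t)] at h3
  rw [real_inner_comm] at h3
  linarith [real_inner_comm (β t) (deriv β t)]

theorem holonomy (β : ℝ → E3) (hβC1 : ContDiff ℝ 1 β)
    (hsph : ∀ t ∈ Set.Icc (0:ℝ) 1, ‖β t‖ = 1) (hclosed : β 0 = β 1)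
    (v : E3) (V : ℝ → E3) (hv : ⟪v, β 0⟫ = 0) (hV : IsParTrans β (deriv β) 0 1 v V)
    (p : E3) (hp : ‖p‖ = 1) (hg : ∀ t ∈ Set.Icc (0:ℝ) 1, 1 + ⟪p, β t⟫ ≠ 0) :
    V 1 = Real.cos (∫ t in (0:ℝ)..1, ⟪p, cross3 (β t) (deriv β t)⟫ / (1 + ⟪p, β t⟫)) • v
      + Real.sin (∫ t in (0:ℝ)..1, ⟪p, cross3 (β t) (deriv β t)⟫ / (1 + ⟪p, β t⟫)) •
        cross3 (β 0) v := by
  have hpp : ⟪p, p⟫ = 1 := by rw [real_inner_self_eq_norm_sq, hp]; norm_num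
  have hperp := inner_deriv_zero β hβC1 hsph
  obtain ⟨hV0, hVint, hVeq⟩ := hV
  have hβc : Continuous β := hβC1.continuous
  have hβ'c : Continuous (deriv β) := hβC1.continuous_deriv (by norm_num)
  have hβd : ∀ t, HasDerivAt β (deriv β t) t := fun t =>
    (hβC1.differentiable (by norm_num) t).hasDerivAt
  -- continuity of V
  have hVc : ContinuousOn V (Set.Icc 0 1) := by
    have h1 : ContinuousOn (fun t => ∫ s in (0:ℝ)..t, ⟪V s, deriv β s⟫ • β s) (Set.Icc 0 1) := by
      rw [← Set.uIcc_of_le (zero_le_one' ℝ)]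
      apply intervalIntegral.continuousOn_primitive_interval
      rw [Set.uIcc_of_le (zero_le_one' ℝ)]
      exact (intervalIntegrable_iff_integrableOn_Icc_of_le zero_le_one).1 hVint
    exact (continuousOn_const.sub h1).congr hVeq
  let pr : ℝ → ℝ := fun t => (Set.projIcc 0 1 zero_le_one t : ℝ)
  have hprc : Continuous pr := continuous_subtype_val.comp continuous_projIcc
  have hpr : ∀ t ∈ Set.Icc (0:ℝ) 1, pr t = t := fun t ht => by
    simp only [pr]; rw [Set.projIcc_of_mem zero_le_one ht]
  have hprm : ∀ t, pr t ∈ Set.Icc (0:ℝ) 1 := fun t => (Set.projIcc 0 1 zero_le_one t).2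
  have hVb : Continuous fun t => V (pr t) := hVc.comp_continuous hprc hprm
  let W : ℝ → E3 := fun t => v - ∫ s in (0:ℝ)..t, ⟪V (pr s), deriv β s⟫ • β s
  have hWV : ∀ t ∈ Set.Icc (0:ℝ) 1, W t = V t := by
    intro t ht
    rw [hVeq t ht]
    simp only [W]
    congr 1
    apply intervalIntegral.integral_congr
    intro s hs
    rw [Set.uIcc_of_le ht.1] at hs
    simp only [hpr s ⟨hs.1, hs.2.trans ht.2⟩]
  have hWd : ∀ t ∈ Set.Icc (0:ℝ) 1, HasDerivAt W (-(⟪W t, deriv β t⟫ • β t)) t := by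
    intro t ht
    have hc : Continuous fun s => ⟪V (pr s), deriv β s⟫ • β s :=
      Continuous.smul (f := fun s => ⟪V (pr s), deriv β s⟫) (hVb.inner hβ'c) hβc
    have := (hc.integral_hasStrictDerivAt 0 t).hasDerivAt.const_sub v
    rw [hpr t ht, ← hWV t ht] at this
    exact this
  have hW0 : W 0 = v := by simp [W]
  -- orthogonality
  have hWperp : ∀ t ∈ Set.Icc (0:ℝ) 1, ⟪W t, β t⟫ = 0 := by
    have h0 : ∀ t ∈ Set.Icc (0:ℝ) 1, ⟪W t, β t⟫ = ⟪W 0, β 0⟫ := by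
      apply constant_of_has_deriv_right_zero (f := fun t => ⟪W t, β t⟫)
      · exact fun t ht => ((hWd t ht).inner ℝ (hβd t)).continuousAt.continuousWithinAt
      · intro t ht
        have ht' := Set.Ico_subset_Icc_self ht
        have h := ((hWd t ht').inner ℝ (hβd t)).hasDerivWithinAt (s := Set.Ici t)
        convert h using 1
        rw [inner_neg_left, inner_smul_left, real_inner_self_eq_norm_sq, hsph t ht']
        simp
    intro t ht; rw [h0 t ht, hW0, hv]
  set ω : ℝ → ℝ := fun t => ⟪p, cross3 (β (pr t)) (deriv β (pr t))⟫ / (1 + ⟪p, β (pr t)⟫) with hω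
  have hωc : Continuous ω := by
    refine Continuous.div ?_ ?_ (fun t => hg _ (hprm t))
    · exact continuous_const.inner (continuous_cross3 (hβc.comp hprc) (hβ'c.comp hprc))
    · exact continuous_const.add (continuous_const.inner (hβc.comp hprc))
  have hωI : (∫ t in (0:ℝ)..1, ⟪p, cross3 (β t) (deriv β t)⟫ / (1 + ⟪p, β t⟫)) =
      ∫ t in (0:ℝ)..1, ω t := by
    apply intervalIntegral.integral_congr
    intro s hs
    rw [Set.uIcc_of_le zero_le_one] at hs
    simp only [hω, hpr s hs]
  rw [hωI]
  let Φ : ℝ → ℝ := fun t => ∫ s in (0:ℝ)..t, ω s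
  have hΦd : ∀ t, HasDerivAt Φ (ω t) t := fun t => (hωc.integral_hasStrictDerivAt 0 t).hasDerivAt
  let U : ℝ → E3 := fun t => W t - (⟪W t, p⟫ / (1 + ⟪p, β t⟫)) • (p + β t)
  have hUd : ∀ t ∈ Set.Icc (0:ℝ) 1, HasDerivAt U (ω t • cross3 p (U t)) t := by
    intro t ht
    have hx := (hWd t ht).inner ℝ (hasDerivAt_const t p)
    have hgd := ((hasDerivAt_const t p).inner ℝ (hβd t)).const_add 1
    have h := (hWd t ht).sub ((hx.div hgd (hg t ht)).smul ((hβd t).const_add p))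
    refine h.congr_deriv ?_
    simp only [Pi.div_apply]
    have hωt : ω t = ⟪p, cross3 (β t) (deriv β t)⟫ / (1 + ⟪p, β t⟫) := by
      simp only [hω, hpr t ht]
    have hbb : ⟪β t, β t⟫ = 1 := by rw [real_inner_self_eq_norm_sq, hsph t ht]; norm_num
    have hG := gram_cross p (β t) (deriv β t) p (U t)
    have i1 : ⟪p, U t⟫ = 0 := by
      simp only [U, inner_sub_right, inner_smul_right, inner_add_right, hpp]
      rw [div_mul_cancel₀ _ (hg t ht), real_inner_comm]; ring
    have i2 : ⟪β t, U t⟫ = -⟪W t, p⟫ := by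
      simp only [U, inner_sub_right, inner_smul_right, inner_add_right, hbb]
      rw [real_inner_comm (W t) (β t), hWperp t ht, real_inner_comm p (β t), add_comm ⟪p, β t⟫ 1,
        div_mul_cancel₀ _ (hg t ht)]; ring
    have i3 : ⟪deriv β t, U t⟫ = ⟪W t, deriv β t⟫ - (⟪W t, p⟫ / (1 + ⟪p, β t⟫)) * ⟪p, deriv β t⟫ := by
      simp only [U, inner_sub_right, inner_smul_right, inner_add_right]
      rw [real_inner_comm (W t) (deriv β t), real_inner_comm (β t) (deriv β t), hperp t ht,
        real_inner_comm p (deriv β t)]; ring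
    rw [hωt, div_eq_inv_mul ⟪p, cross3 (β t) (deriv β t)⟫, mul_smul, hG, i1, i2, i3, hpp, real_inner_comm p (β t),
      real_inner_comm p (deriv β t)]
    simp only [inner_zero_right, inner_zero_left, inner_neg_left, inner_smul_left, add_zero, zero_add]
    rw [real_inner_comm p (β t)]
    have hg' := hg t ht
    simp only [RCLike.conj_to_real]
    set g := 1 + ⟪p, β t⟫ with hgdef
    have hpb : ⟪p, β t⟫ = g - 1 := by rw [hgdef]; ring
    rw [hpb]
    generalize ⟪W t, p⟫ = x
    generalize ⟪W t, deriv β t⟫ = y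
    generalize ⟪p, deriv β t⟫ = k
    match_scalars <;> field_simp <;> ring
  have hUp : ∀ t ∈ Set.Icc (0:ℝ) 1, ⟪p, U t⟫ = 0 := by
    intro t ht
    simp only [U, inner_sub_right, inner_smul_right, inner_add_right, hpp]
    rw [div_mul_cancel₀ _ (hg t ht), real_inner_comm]; ring
  have hcc : ∀ t ∈ Set.Icc (0:ℝ) 1, cross3 p (cross3 p (U t)) = - U t := by
    intro t ht
    have h := hUp t ht
    have : cross3 p (cross3 p (U t)) = ⟪p, U t⟫ • p - ⟪p, p⟫ • U t := by
      apply E3_ext <;> simp only [inner3, cross3_0, cross3_1, cross3_2, PiLp.sub_apply,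
        PiLp.smul_apply, smul_eq_mul] <;> ring
    rw [this, h, hpp]; simp
  -- unwinding
  have hconst : ∀ t ∈ Set.Icc (0:ℝ) 1,
      Real.cos (Φ t) • U t - Real.sin (Φ t) • cross3 p (U t) =
      Real.cos (Φ 0) • U 0 - Real.sin (Φ 0) • cross3 p (U 0) := by
    have hd : ∀ t ∈ Set.Icc (0:ℝ) 1, HasDerivAt
        (fun t => Real.cos (Φ t) • U t - Real.sin (Φ t) • cross3 p (U t)) 0 t := by
      intro t ht
      have h1 := (hΦd t).cos.smul (hUd t ht)
      have h2 := (hΦd t).sin.smul ((crossL p).hasFDerivAt.comp_hasDerivAt t (hUd t ht))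
      refine (h1.sub h2).congr_deriv ?_
      simp only [crossL_apply, cross3_smul_right, Function.comp, hcc t ht]
      module
    apply constant_of_has_deriv_right_zero
    · exact fun t ht => (hd t ht).continuousAt.continuousWithinAt
    · exact fun t ht => (hd t (Set.Ico_subset_Icc_self ht)).hasDerivWithinAt
  have m0 : (0:ℝ) ∈ Set.Icc (0:ℝ) 1 := by simp
  have m1 : (1:ℝ) ∈ Set.Icc (0:ℝ) 1 := by simp
  have h1 := hconst 1 m1
  have hΦ0 : Φ 0 = 0 := by simp [Φ]
  rw [hΦ0, Real.cos_zero, Real.sin_zero, one_smul, zero_smul, sub_zero] at h1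
  have hΦ1 : (∫ t in (0:ℝ)..1, ω t) = Φ 1 := rfl
  rw [hΦ1, ← hWV 1 m1]
  generalize Φ 1 = φ at h1
  have hU1 : U 1 = Real.cos φ • U 0 + Real.sin φ • cross3 p (U 0) := by
    rw [← h1]
    have e : cross3 p (Real.cos φ • U 1 - Real.sin φ • cross3 p (U 1)) =
        Real.cos φ • cross3 p (U 1) + Real.sin φ • U 1 := by
      rw [sub_eq_add_neg, ← neg_smul, cross3_add_right, cross3_smul_right, cross3_smul_right,
        hcc 1 m1]; module
    rw [e]
    have := Real.sin_sq_add_cos_sq φ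
    have : U 1 = (Real.sin φ ^ 2 + Real.cos φ ^ 2) • U 1 := by rw [this, one_smul]
    nth_rewrite 1 [this]
    module
  have hU0 : U 0 = v - (⟪v, p⟫ / (1 + ⟪p, β 0⟫)) • (p + β 0) := by simp only [U, hW0]
  have hvp : ⟪v, β 0⟫ = 0 := hv
  have ht := transport_cross p (β 0) v hp (hsph 0 m0) hvp (hg 0 m0)
  rw [← hU0] at ht
  have hβU : W 1 = U 1 - (⟪β 0, U 1⟫ / (1 + ⟪p, β 0⟫)) • (p + β 0) := by
    have hbb : ⟪β 0, β 0⟫ = 1 := by rw [real_inner_self_eq_norm_sq, hsph 0 m0]; norm_num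
    have hw := hWperp 1 m1
    have hU1' : U 1 = W 1 - (⟪W 1, p⟫ / (1 + ⟪p, β 0⟫)) • (p + β 0) := by simp only [U, hclosed]
    rw [← hclosed] at hw
    have i2 : ⟪β 0, U 1⟫ = -⟪W 1, p⟫ := by
      rw [hU1']
      simp only [inner_sub_right, inner_smul_right, inner_add_right, hbb]
      rw [real_inner_comm (W 1) (β 0), hw, real_inner_comm p (β 0), add_comm ⟪p, β 0⟫ 1,
        div_mul_cancel₀ _ (hg 0 m0)]; ring
    rw [i2, hU1']; module
  have hβv : ∀ x : E3, ⟪x, β 0⟫ = 0 →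
      ⟪β 0, x - (⟪x, p⟫ / (1 + ⟪p, β 0⟫)) • (p + β 0)⟫ = -⟪x, p⟫ := by
    intro x hx
    have hbb : ⟪β 0, β 0⟫ = 1 := by rw [real_inner_self_eq_norm_sq, hsph 0 m0]; norm_num
    simp only [inner_sub_right, inner_smul_right, inner_add_right, hbb]
    rw [real_inner_comm x (β 0), hx, real_inner_comm p (β 0), add_comm ⟪p, β 0⟫ 1,
        div_mul_cancel₀ _ (hg 0 m0)]; ring
  rw [hβU, hU1, ← ht, inner_add_right, inner_smul_right, inner_smul_right, hβv (cross3 (β 0) v)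
    (by rw [real_inner_comm]; exact inner_cross_left _ _), hU0, hβv v hvp]
  module


/-- Vectors not lying on the cone over the curve. -/
def Gd (β : ℝ → E3) : Set E3 := {x | ∀ t ∈ Set.Icc (0:ℝ) 1, ⟪x, β t⟫ < ‖x‖}

/-- The kernel. -/
def Kf (β : ℝ → E3) (x : E3) (t : ℝ) : ℝ :=
  ⟪x, cross3 (β t) (deriv β t)⟫ / (‖x‖ - ⟪x, β t⟫)

/-- The holonomy angle function. -/
def Ff (β : ℝ → E3) (x : E3) : ℝ := ∫ t in (0:ℝ)..1, Kf β x t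

/-- Clamping to the unit interval. -/
def pr (t : ℝ) : ℝ := (Set.projIcc 0 1 zero_le_one t : ℝ)

lemma pr_cont : Continuous pr := continuous_subtype_val.comp continuous_projIcc
lemma pr_eq {t : ℝ} (ht : t ∈ Set.Icc (0:ℝ) 1) : pr t = t := by
  simp only [pr]; rw [Set.projIcc_of_mem zero_le_one ht]
lemma pr_mem (t : ℝ) : pr t ∈ Set.Icc (0:ℝ) 1 := (Set.projIcc 0 1 zero_le_one t).2

lemma Ff_eq_pr (β : ℝ → E3) (x : E3) : Ff β x = ∫ t in (0:ℝ)..1, Kf β x (pr t) := by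
  apply intervalIntegral.integral_congr
  intro s hs
  rw [Set.uIcc_of_le zero_le_one] at hs
  simp only [pr_eq hs]

lemma Gd_ne_zero {β : ℝ → E3} {x : E3} (hx : x ∈ Gd β) : x ≠ 0 := by
  rintro rfl
  simpa using hx 0 (by simp)

lemma Gd_smul {β : ℝ → E3} {x : E3} (hx : x ∈ Gd β) {r : ℝ} (hr : 0 < r) : r • x ∈ Gd β := by
  intro t ht
  have := hx t ht
  rw [inner_smul_left, norm_smul, Real.norm_of_nonneg hr.le]
  exact mul_lt_mul_of_pos_left this hr

lemma Kf_smul (β : ℝ → E3) (x : E3) {r : ℝ} (hr : 0 < r) (t : ℝ) :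
    Kf β (r • x) t = Kf β x t := by
  unfold Kf
  rw [inner_smul_left, inner_smul_left, norm_smul, Real.norm_of_nonneg hr.le]
  simp only [RCLike.conj_to_real]
  rw [← mul_sub, mul_div_mul_left _ _ hr.ne']

lemma Ff_smul (β : ℝ → E3) (x : E3) {r : ℝ} (hr : 0 < r) : Ff β (r • x) = Ff β x := by
  unfold Ff; simp only [Kf_smul β x hr]

lemma Ff_continuousOn (β : ℝ → E3) (hβC1 : ContDiff ℝ 1 β) : ContinuousOn (Ff β) (Gd β) := by
  have hβc : Continuous β := hβC1.continuous
  have hβ'c : Continuous (deriv β) := hβC1.continuous_deriv (by norm_num)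
  rw [continuousOn_iff_continuous_domRestrict]
  have : (Gd β).domRestrict (Ff β) = fun x : Gd β => ∫ t in (0:ℝ)..1, Kf β x (pr t) := by
    ext x; exact Ff_eq_pr β x
  rw [this]
  apply intervalIntegral.continuous_parametric_intervalIntegral_of_continuous'
  unfold Function.uncurry Kf
  have c1 : Continuous fun a : Gd β × ℝ => β (pr a.2) := hβc.comp (pr_cont.comp continuous_snd)
  have c2 : Continuous fun a : Gd β × ℝ => deriv β (pr a.2) := hβ'c.comp (pr_cont.comp continuous_snd)
  have c0 : Continuous fun a : Gd β × ℝ => (a.1 : E3) := continuous_subtype_val.comp continuous_fst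
  refine Continuous.div (c0.inner (continuous_cross3 c1 c2)) (c0.norm.sub (c0.inner c1)) ?_
  intro a
  have := a.1.2 (pr a.2) (pr_mem _)
  exact (sub_pos.2 this).ne'

lemma Gd_isOpen (β : ℝ → E3) (hβc : Continuous β) : IsOpen (Gd β) := by
  have : (Gd β)ᶜ = Prod.fst '' ((Set.univ ×ˢ Set.Icc (0:ℝ) 1) ∩ {a : E3 × ℝ | ‖a.1‖ ≤ ⟪a.1, β a.2⟫}) := by
    ext x
    simp only [Gd, Set.mem_compl_iff, Set.mem_ofPred_eq, Set.mem_image, Set.mem_inter_iff,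
      Set.mem_prod, Set.mem_univ, true_and, Prod.exists, exists_and_right, exists_eq_right]
    push Not
    exact Iff.rfl
  rw [← isClosed_compl_iff, this]
  have hc : IsClosed {a : E3 × ℝ | ‖a.1‖ ≤ ⟪a.1, β a.2⟫} :=
    isClosed_le continuous_fst.norm (continuous_fst.inner (hβc.comp continuous_snd))
  have h2 : Prod.fst '' ((Set.univ ×ˢ Set.Icc (0:ℝ) 1) ∩ {a : E3 × ℝ | ‖a.1‖ ≤ ⟪a.1, β a.2⟫}) =
      Prod.fst '' {a : E3 × (Set.Icc (0:ℝ) 1) | ‖a.1‖ ≤ ⟪a.1, β a.2⟫} := by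
    ext x; simp
  rw [h2]
  exact isClosedMap_fst_of_compactSpace _
    (isClosed_le continuous_fst.norm (continuous_fst.inner
      (hβc.comp (continuous_subtype_val.comp continuous_snd))))

theorem Ff_hol (β : ℝ → E3) (hβC1 : ContDiff ℝ 1 β)
    (hsph : ∀ t ∈ Set.Icc (0:ℝ) 1, ‖β t‖ = 1) (hclosed : β 0 = β 1)
    (v : E3) (V : ℝ → E3) (hv : ⟪v, β 0⟫ = 0) (hV : IsParTrans β (deriv β) 0 1 v V)
    (x : E3) (hx : x ∈ Gd β) :
    V 1 = Real.cos (Ff β x) • v - Real.sin (Ff β x) • cross3 (β 0) v := by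
  have hx0 := Gd_ne_zero hx
  have hr : 0 < ‖x‖⁻¹ := inv_pos.2 (norm_pos_iff.2 hx0)
  rw [← Ff_smul β x hr]
  have hxg := Gd_smul hx hr
  have hn : ‖‖x‖⁻¹ • x‖ = 1 := by
    rw [norm_smul, norm_inv, norm_norm, inv_mul_cancel₀ (norm_ne_zero_iff.2 hx0)]
  generalize ‖x‖⁻¹ • x = q at hxg hn
  have h := holonomy β hβC1 hsph hclosed v V hv hV (-q) (by rw [norm_neg, hn]) (by
    intro t ht
    have := hxg t ht
    rw [hn] at this
    rw [inner_neg_left]; linarith)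
  have e : (∫ t in (0:ℝ)..1, ⟪-q, cross3 (β t) (deriv β t)⟫ / (1 + ⟪-q, β t⟫)) = - Ff β q := by
    rw [Ff, ← intervalIntegral.integral_neg]
    congr 1; ext t
    rw [Kf, hn, inner_neg_left, inner_neg_left, neg_div, ← sub_eq_add_neg]
  rw [h, e, Real.cos_neg, Real.sin_neg]; module

theorem Ff_mod (β : ℝ → E3) (hβC1 : ContDiff ℝ 1 β)
    (hsph : ∀ t ∈ Set.Icc (0:ℝ) 1, ‖β t‖ = 1) (hclosed : β 0 = β 1)
    (v : E3) (V : ℝ → E3) (hv0 : v ≠ 0) (hv : ⟪v, β 0⟫ = 0) (hV : IsParTrans β (deriv β) 0 1 v V)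
    (x y : E3) (hx : x ∈ Gd β) (hy : y ∈ Gd β) :
    ∃ n : ℤ, Ff β x = Ff β y + n * (2 * Real.pi) := by
  have h1 := Ff_hol β hβC1 hsph hclosed v V hv hV x hx
  rw [Ff_hol β hβC1 hsph hclosed v V hv hV y hy] at h1
  have hvv : ⟪v, v⟫ ≠ 0 := by simpa using hv0
  set w := cross3 (β 0) v with hw
  have hvw : ⟪v, w⟫ = 0 := inner_cross_right _ _
  have hww : ⟪w, w⟫ ≠ 0 := by
    rw [real_inner_self_eq_norm_sq, hw, cross3_norm_sq, hsph 0 (by simp), real_inner_comm, hv,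
      ← real_inner_self_eq_norm_sq]
    simpa using hv0
  have hc : Real.cos (Ff β y) = Real.cos (Ff β x) := by
    have := congrArg (fun z => ⟪v, z⟫) h1
    simp only [inner_sub_right, inner_smul_right, hvw, mul_zero, sub_zero] at this
    exact mul_right_cancel₀ hvv this
  have hs : Real.sin (Ff β y) = Real.sin (Ff β x) := by
    have := congrArg (fun z => ⟪w, z⟫) h1
    simp only [inner_sub_right, inner_smul_right, real_inner_comm v w, hvw, mul_zero, zero_sub,
      neg_inj] at this
    exact mul_right_cancel₀ hww this
  have hcos : Real.cos (Ff β x - Ff β y) = 1 := by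
    rw [Real.cos_sub, hc, hs]; nlinarith [Real.sin_sq_add_cos_sq (Ff β x)]
  obtain ⟨n, hn⟩ := (Real.cos_eq_one_iff _).1 hcos
  exact ⟨n, by linarith⟩

theorem Ff_const (β : ℝ → E3) (hβC1 : ContDiff ℝ 1 β)
    (hmod : ∀ x ∈ Gd β, ∀ y ∈ Gd β, ∃ n : ℤ, Ff β x = Ff β y + n * (2 * Real.pi))
    (C : Set E3) (hC : IsPreconnected C) (hCG : C ⊆ Gd β)
    (x y : E3) (hx : x ∈ C) (hy : y ∈ C) : Ff β x = Ff β y := by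
  have hcont : ContinuousOn (fun z => (Ff β z - Ff β y) / (2 * Real.pi)) C :=
    (((Ff_continuousOn β hβC1).mono hCG).sub continuousOn_const).div_const _
  have hD : IsDiscrete (Set.range ((↑) : ℤ → ℝ)) :=
    ⟨(Int.isClosedEmbedding_coe_real.isEmbedding.toHomeomorph).symm.isEmbedding.discreteTopology⟩
  obtain ⟨c, _, hc⟩ := hC.eqOn_const_of_mapsTo hD hcont (by
    intro z hz
    obtain ⟨n, hn⟩ := hmod z (hCG hz) y (hCG hy)
    refine ⟨n, ?_⟩
    show (n:ℝ) = (Ff β z - Ff β y) / (2 * Real.pi)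
    rw [hn]; field_simp; ring) ⟨_, ⟨0, rfl⟩⟩
  have h1 := hc hx
  have h2 := hc hy
  simp only [Function.const_apply] at h1 h2
  rw [← h2] at h1
  have hpi := Real.pi_pos
  field_simp at h1
  linarith


/-- Majorant of the kernel. -/
def hh (b x : E3) : ℝ := Real.sqrt (‖x‖ ^ 2 - ⟪x, b⟫ ^ 2) / (‖x‖ - ⟪x, b⟫)

lemma inner_le_norm_of_unit (b x : E3) (hb : ‖b‖ = 1) : ⟪x, b⟫ ≤ ‖x‖ := by
  simpa [hb] using real_inner_le_norm x b

lemma kernel_le (b d x : E3) (hb : ‖b‖ = 1) :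
    |⟪x, cross3 b d⟫ / (‖x‖ - ⟪x, b⟫)| ≤ ‖d‖ * hh b x := by
  have h0 : 0 ≤ ‖x‖ - ⟪x, b⟫ := sub_nonneg.2 (inner_le_norm_of_unit b x hb)
  rw [abs_div, abs_of_nonneg h0, hh, ← mul_div_assoc]
  gcongr
  rw [inner_cross_cyc]
  refine (abs_real_inner_le_norm _ _).trans ?_
  rw [mul_comm]
  gcongr
  apply Real.le_sqrt_of_sq_le
  rw [cross3_norm_sq, hb]; simp

/-- First coordinate vector. -/
def e0 : E3 := EuclideanSpace.single 0 1

lemma norm_e0 : ‖e0‖ = 1 := by simp [e0]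

lemma inner_e0 (x : E3) : ⟪x, e0⟫ = x 0 := by simp [e0, inner3]

lemma hh_measurable (b : E3) : Measurable (hh b) := by
  unfold hh
  have : Continuous fun x : E3 => ⟪x, b⟫ := by fun_prop
  have h2 : Measurable fun x : E3 => ⟪x, b⟫ := this.measurable
  exact (((measurable_norm.pow_const 2).sub (h2.pow_const 2)).sqrt).div (measurable_norm.sub h2)

lemma hh_rot (b : E3) (hb : ‖b‖ = 1) :
    ∫⁻ x in Metric.ball (0:E3) 1, ENNReal.ofReal (hh b x) =
      ∫⁻ x in Metric.ball (0:E3) 1, ENNReal.ofReal (hh e0 x) := by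
  let L : E3 ≃ₗᵢ[ℝ] E3 := (ℝ ∙ (e0 - b))ᗮ.reflection
  have hL : L e0 = b := Submodule.reflection_sub (by rw [hb, norm_e0])
  have h := L.measurePreserving.setLIntegral_comp_preimage_emb
    L.toHomeomorph.measurableEmbedding (fun x => ENNReal.ofReal (hh b x)) (Metric.ball (0:E3) 1)
  rw [← h]
  have hpre : L ⁻¹' Metric.ball (0:E3) 1 = Metric.ball (0:E3) 1 := by
    ext x; simp
  rw [hpre]
  congr 1
  ext x
  have : ⟪L x, b⟫ = ⟪x, e0⟫ := by rw [← hL, L.inner_map_map]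
  simp only [hh, this, LinearIsometryEquiv.norm_map]

lemma abs_rpow_int : IntegrableOn (fun x : ℝ => |x| ^ (-(1/2) : ℝ)) (Set.Icc (-1) 1) := by
  have h1 : IntervalIntegrable (fun x : ℝ => |x| ^ (-(1/2) : ℝ)) volume 0 1 := by
    refine (intervalIntegral.intervalIntegrable_rpow' (a := 0) (b := 1)
      (r := (-(1/2) : ℝ)) (by norm_num)).congr ?_
    intro x hx
    rw [Set.uIoc_of_le zero_le_one] at hx
    simp only [abs_of_pos hx.1]
  have h2 : IntervalIntegrable (fun x : ℝ => |x| ^ (-(1/2) : ℝ)) volume (-1) 0 := by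
    have := ((IntervalIntegrable.iff_comp_neg (by simp)).1 h1).symm
    simpa using this
  exact (intervalIntegrable_iff_integrableOn_Icc_of_le (by norm_num)).1 (h2.trans h1)

/-- Product majorant factors. -/
def fmaj (i : Fin 3) : ℝ → ℝ :=
  if i = 0 then (Set.Icc (-1:ℝ) 1).indicator (fun _ => 2)
  else (Set.Icc (-1:ℝ) 1).indicator (fun x => |x| ^ (-(1/2) : ℝ))

lemma fmaj_int (i : Fin 3) : Integrable (fmaj i) := by
  unfold fmaj
  split_ifs
  · exact (integrable_indicator_iff measurableSet_Icc).2 (by simp)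
  · exact (integrable_indicator_iff measurableSet_Icc).2 abs_rpow_int

lemma null_plane (m : E3) (hm : m ≠ 0) : volume {x : E3 | ⟪x, m⟫ = 0} = 0 := by
  have h : {x : E3 | ⟪x, m⟫ = 0} = ((ℝ ∙ m)ᗮ : Submodule ℝ E3) := by
    ext x; simp [Submodule.mem_orthogonal_singleton_iff_inner_left]
  rw [h]
  apply Measure.addHaar_submodule
  rw [Ne, Submodule.orthogonal_eq_top_iff, Submodule.span_singleton_eq_bot]
  exact hm

lemma hh_e0_le (x : E3) (hx : ‖x‖ < 1) (h1 : x 1 ≠ 0) (h2 : x 2 ≠ 0) :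
    hh e0 x ≤ ∏ i, fmaj i (x i) := by
  have hn : ‖x‖ ^ 2 = x 0 ^ 2 + x 1 ^ 2 + x 2 ^ 2 := by
    rw [← real_inner_self_eq_norm_sq, inner3]; ring
  have hx1 : ‖x‖ ^ 2 < 1 := by nlinarith [norm_nonneg x]
  have hm : ∀ i : Fin 3, x i ∈ Set.Icc (-1:ℝ) 1 := by
    intro i
    exact abs_le.1 ((PiLp.norm_apply_le x i).trans hx.le)
  rw [Fin.prod_univ_three]
  have f0 : fmaj 0 (x 0) = 2 := by simp only [fmaj, if_true, Set.indicator_of_mem (hm 0)]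
  have f1 : fmaj 1 (x 1) = |x 1| ^ (-(1/2) : ℝ) := by
    simp only [fmaj, one_ne_zero, if_false, Set.indicator_of_mem (hm 1)]
  have f2 : fmaj 2 (x 2) = |x 2| ^ (-(1/2) : ℝ) := by
    have : (2 : Fin 3) ≠ 0 := by decide
    simp only [fmaj, this, if_false, Set.indicator_of_mem (hm 2)]
  rw [f0, f1, f2, hh, inner_e0, Real.rpow_neg (abs_nonneg _), Real.rpow_neg (abs_nonneg _),
    ← Real.sqrt_eq_rpow, ← Real.sqrt_eq_rpow]
  set ρ2 := x 1 ^ 2 + x 2 ^ 2 with hρ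
  have e : ‖x‖ ^ 2 - x 0 ^ 2 = ρ2 := by rw [hn]; ring
  rw [e]
  have p1 : 0 < |x 1| := abs_pos.2 h1
  have p2 : 0 < |x 2| := abs_pos.2 h2
  have pρ : 0 < ρ2 := by positivity
  have hle : |x 1| * |x 2| ≤ ρ2 := by
    nlinarith [sq_nonneg (|x 1| - |x 2|), sq_abs (x 1), sq_abs (x 2), mul_pos p1 p2]
  have hx0 : |x 0| ≤ ‖x‖ := by
    apply abs_le_of_sq_le_sq _ (norm_nonneg _)
    nlinarith
  have hsum : ‖x‖ + x 0 ≤ 2 := by have := (hm 0).2; linarith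
  have hfac : (‖x‖ - x 0) * (‖x‖ + x 0) = ρ2 := by rw [← e]; ring
  have hd0 : 0 ≤ ‖x‖ - x 0 := by linarith [(abs_le.1 hx0).2]
  have hd : 0 < ‖x‖ - x 0 := by
    rcases hd0.lt_or_eq with h | h
    · exact h
    · rw [← h, zero_mul] at hfac; linarith
  have hs : Real.sqrt (|x 1|) * Real.sqrt (|x 2|) ≤ Real.sqrt ρ2 := by
    rw [← Real.sqrt_mul (abs_nonneg _)]; exact Real.sqrt_le_sqrt hle
  have q1 := Real.sqrt_pos.2 p1
  have q2 := Real.sqrt_pos.2 p2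
  have qρ := Real.sqrt_pos.2 pρ
  have hρs : Real.sqrt ρ2 * Real.sqrt ρ2 = ρ2 := Real.mul_self_sqrt pρ.le
  have : 2 * (√|x 1|)⁻¹ * (√|x 2|)⁻¹ = 2 / (√|x 1| * √|x 2|) := by field_simp
  rw [this, div_le_div_iff₀ hd (mul_pos q1 q2)]
  have h3 : ρ2 ≤ 2 * (‖x‖ - x 0) := by
    rw [← hfac]; nlinarith
  nlinarith

lemma hh_e0_fin : ∫⁻ x in Metric.ball (0:E3) 1, ENNReal.ofReal (hh e0 x) < ⊤ := by
  have hI : Integrable (fun x : Fin 3 → ℝ => ∏ i, fmaj i (x i)) := Integrable.fintype_prod fmaj_int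
  have hI2 : Integrable (fun x : E3 => ∏ i, fmaj i (x i)) :=
    (PiLp.volume_preserving_ofLp (Fin 3)).integrable_comp_of_integrable hI
  have hlt := (hI2.integrableOn (s := Metric.ball (0:E3) 1)).2
  refine lt_of_le_of_lt (lintegral_mono_ae ?_) hlt
  have hne : ∀ i : Fin 3, ∀ᵐ x : E3, x i ≠ 0 := by
    intro i
    have h := null_plane (EuclideanSpace.single i 1) (by simp)
    rw [ae_iff]
    convert h using 3
    ext x
    simp [EuclideanSpace.inner_single_right]
  filter_upwards [ae_restrict_of_ae (hne 1), ae_restrict_of_ae (hne 2),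
    ae_restrict_mem Metric.isOpen_ball.measurableSet] with x h1 h2 hx
  rw [← ofReal_norm]
  apply ENNReal.ofReal_le_ofReal
  refine (hh_e0_le x (by simpa using hx) h1 h2).trans (le_abs_self _)


lemma det_zero_of_ker (A : E3 →L[ℝ] E3) (w : E3) (hw : w ≠ 0) (hA : A w = 0) : A.det = 0 := by
  by_contra h
  have h' : LinearMap.det (A : E3 →ₗ[ℝ] E3) ≠ 0 := h
  have hi := (LinearMap.equivOfDetNeZero _ h').injective
  apply hw
  apply hi
  simpa using hA

lemma null_cone (β : ℝ → E3) (hβC1 : ContDiff ℝ 1 β)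
    (hsph : ∀ t ∈ Set.Icc (0:ℝ) 1, ‖β t‖ = 1) : volume (Gd β)ᶜ = 0 := by
  let f : E3 → E3 := fun y => y 0 • β (y 1)
  let P : Fin 3 → (E3 →L[ℝ] ℝ) := fun i => EuclideanSpace.proj i
  have hP : ∀ i y, P i y = y i := fun i y => rfl
  have hf : ∀ y, HasFDerivAt f (y 0 • ((ContinuousLinearMap.toSpanSingleton ℝ (deriv β (y 1))).comp (P 1))
      + (P 0).smulRight (β (y 1))) y := by
    intro y
    have hβd : HasFDerivAt β (ContinuousLinearMap.toSpanSingleton ℝ (deriv β (y 1))) (y 1) :=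
      ((hβC1.differentiable (by norm_num) (y 1)).hasDerivAt).hasFDerivAt
    have h1 : HasFDerivAt (fun y : E3 => β (y 1)) _ y := hβd.comp y (P 1).hasFDerivAt
    exact ((P 0).hasFDerivAt (x := y)).smul h1
  have hnull : volume (f '' Set.univ) = 0 := by
    refine addHaar_image_eq_zero_of_det_fderivWithin_eq_zero volume
      (fun y _ => (hf y).hasFDerivWithinAt) ?_
    intro y _
    apply det_zero_of_ker _ (EuclideanSpace.single 2 1) (by simp)
    simp [hP]
  refine measure_mono_null ?_ hnull
  intro x hx
  simp only [Gd, Set.mem_compl_iff, Set.mem_ofPred_eq] at hx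
  push Not at hx
  obtain ⟨t, ht, hxt⟩ := hx
  have h1 : ⟪x, β t⟫ = ‖x‖ * ‖β t‖ := by
    apply le_antisymm (real_inner_le_norm _ _)
    rw [hsph t ht, mul_one]; exact hxt
  have h2 := (inner_eq_norm_mul_iff_real).1 h1
  rw [hsph t ht, one_smul] at h2
  refine ⟨WithLp.toLp 2 ![‖x‖, t, 0], trivial, ?_⟩
  show ‖x‖ • β t = x
  exact h2.symm

lemma Kf_measurable (β : ℝ → E3) (hβC1 : ContDiff ℝ 1 β) :
    Measurable (Function.uncurry (Kf β)) := by
  have hβc : Continuous β := hβC1.continuous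
  have hβ'c : Continuous (deriv β) := hβC1.continuous_deriv (by norm_num)
  unfold Function.uncurry Kf
  have c1 : Continuous fun a : E3 × ℝ => β a.2 := hβc.comp continuous_snd
  have c2 : Continuous fun a : E3 × ℝ => deriv β a.2 := hβ'c.comp continuous_snd
  have c0 : Continuous fun a : E3 × ℝ => a.1 := continuous_fst
  exact (c0.inner (continuous_cross3 c1 c2)).measurable.div (c0.norm.sub (c0.inner c1)).measurable

lemma Kf_integrable (β : ℝ → E3) (hβC1 : ContDiff ℝ 1 β)
    (hsph : ∀ t ∈ Set.Icc (0:ℝ) 1, ‖β t‖ = 1) :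
    Integrable (Function.uncurry (Kf β))
      ((volume.restrict (Metric.ball (0:E3) 1)).prod (volume.restrict (Set.Ioc (0:ℝ) 1))) := by
  have hm := Kf_measurable β hβC1
  have hβ'c : Continuous (deriv β) := hβC1.continuous_deriv (by norm_num)
  obtain ⟨M, hM⟩ := (isCompact_Icc (a := (0:ℝ)) (b := 1)).exists_bound_of_continuousOn hβ'c.continuousOn
  refine ⟨hm.aestronglyMeasurable, ?_⟩
  unfold HasFiniteIntegral
  rw [lintegral_prod_symm _ hm.enorm.aemeasurable]
  set C := ∫⁻ x in Metric.ball (0:E3) 1, ENNReal.ofReal (hh e0 x) with hC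
  have hCfin : C < ⊤ := hh_e0_fin
  have hb : ∀ᵐ t ∂(volume.restrict (Set.Ioc (0:ℝ) 1)),
      ∫⁻ x in Metric.ball (0:E3) 1, ‖Function.uncurry (Kf β) (x, t)‖ₑ ≤ ENNReal.ofReal M * C := by
    filter_upwards [ae_restrict_mem measurableSet_Ioc] with t ht
    have ht' : t ∈ Set.Icc (0:ℝ) 1 := Set.Ioc_subset_Icc_self ht
    rw [hC, ← hh_rot (β t) (hsph t ht'), ← lintegral_const_mul _ (hh_measurable _).ennreal_ofReal]
    apply lintegral_mono
    intro x
    simp only [Function.uncurry]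
    have hM0 : 0 ≤ M := (norm_nonneg _).trans (hM t ht')
    rw [← ENNReal.ofReal_mul hM0, ← ofReal_norm]
    apply ENNReal.ofReal_le_ofReal
    refine (kernel_le (β t) (deriv β t) x (hsph t ht')).trans ?_
    have h0 : 0 ≤ hh (β t) x :=
      div_nonneg (Real.sqrt_nonneg _) (sub_nonneg.2 (inner_le_norm_of_unit _ x (hsph t ht')))
    exact mul_le_mul_of_nonneg_right (hM t ht') h0
  refine lt_of_le_of_lt (lintegral_mono_ae hb) ?_
  rw [lintegral_const]
  simp only [Measure.restrict_apply MeasurableSet.univ, Set.univ_inter, Real.volume_Ioc]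
  exact ENNReal.mul_lt_top (ENNReal.mul_lt_top ENNReal.ofReal_lt_top hCfin) ENNReal.ofReal_lt_top

lemma Kf_int_zero (β : ℝ → E3) (t : ℝ) : ∫ x in Metric.ball (0:E3) 1, Kf β x t = 0 := by
  set m := cross3 (β t) (deriv β t) with hm
  let L : E3 ≃ₗᵢ[ℝ] E3 := (ℝ ∙ m)ᗮ.reflection
  have hLm : L m = -m := Submodule.reflection_orthogonalComplement_singleton_eq_neg m
  have hLb : L (β t) = β t := by
    apply Submodule.reflection_mem_subspace_eq_self
    rw [Submodule.mem_orthogonal_singleton_iff_inner_left]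
    exact inner_cross_left _ _
  have h := L.measurePreserving.setIntegral_preimage_emb
    L.toHomeomorph.measurableEmbedding (fun x => Kf β x t) (Metric.ball (0:E3) 1)
  have hpre : L ⁻¹' Metric.ball (0:E3) 1 = Metric.ball (0:E3) 1 := by
    ext x; simp
  rw [hpre] at h
  have hneg : ∀ x, Kf β (L x) t = - Kf β x t := by
    intro x
    have h1 : ⟪L x, m⟫ = - ⟪x, m⟫ := by
      have := L.inner_map_map x m
      rw [hLm, inner_neg_right] at this; linarith
    have h2 : ⟪L x, β t⟫ = ⟪x, β t⟫ := by
      have := L.inner_map_map x (β t)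
      rwa [hLb] at this
    simp only [Kf]
    rw [← hm, h1, h2, LinearIsometryEquiv.norm_map, neg_div]
  simp only [hneg, integral_neg] at h
  linarith

theorem Ff_int_zero (β : ℝ → E3) (hβC1 : ContDiff ℝ 1 β)
    (hsph : ∀ t ∈ Set.Icc (0:ℝ) 1, ‖β t‖ = 1) :
    ∫ x in Metric.ball (0:E3) 1, Ff β x = 0 := by
  have h := integral_integral_swap (Kf_integrable β hβC1 hsph)
  simp only [Kf_int_zero, integral_zero] at h
  rw [← h]
  congr 1; ext x
  rw [Ff, intervalIntegral.integral_of_le zero_le_one]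


lemma jump_alg (l e ε u τ N0 N1 D0 D1 : ℝ) (hl : 0 < l) (he : 0 < e) (he1 : e ≤ l / 8)
    (he2 : 40 * e ≤ ε * l) (hu : 0 < u) (hN0 : |N0| ≤ e * |τ|) (hD1 : |D1| ≤ e * |τ|)
    (hN1 : |N1 - l| ≤ e) (hD0 : |D0 - l / 2 * (u ^ 2 + τ ^ 2)| ≤ e * (u ^ 2 + τ ^ 2)) :
    |(N0 + u * N1) / (D0 - u * D1) - (N0 - u * N1) / (D0 + u * D1) - 4 * (u / (u ^ 2 + τ ^ 2))|
      ≤ ε * (u / (u ^ 2 + τ ^ 2)) := by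
  set r := u ^ 2 + τ ^ 2 with hr
  have hr0 : 0 < r := by positivity
  have hτ : τ ^ 2 ≤ r := by rw [hr]; nlinarith
  have hτ2 : |τ| ^ 2 = τ ^ 2 := sq_abs τ
  obtain ⟨a, ha⟩ : ∃ a, D0 = a * r := ⟨D0 / r, by field_simp⟩
  obtain ⟨f, hf⟩ : ∃ f, N0 * D1 = f * r := ⟨N0 * D1 / r, by field_simp⟩
  obtain ⟨g, hg⟩ : ∃ g, u * D1 = g * r := ⟨u * D1 / r, by field_simp⟩
  have ha1 : |a - l / 2| ≤ e := by
    have : D0 - l / 2 * r = (a - l / 2) * r := by rw [ha]; ring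
    rw [this, abs_mul, abs_of_pos hr0] at hD0
    exact le_of_mul_le_mul_right hD0 hr0
  have hf1 : |f| ≤ e ^ 2 := by
    have h1 : |N0 * D1| ≤ e ^ 2 * r := by
      rw [abs_mul]
      calc |N0| * |D1| ≤ (e * |τ|) * (e * |τ|) := by gcongr
        _ = e ^ 2 * τ ^ 2 := by rw [← hτ2]; ring
        _ ≤ e ^ 2 * r := by gcongr
    rw [hf, abs_mul, abs_of_pos hr0] at h1
    exact le_of_mul_le_mul_right h1 hr0
  have hg1 : |g| ≤ e := by
    have h1 : |u * D1| ≤ e * r := by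
      rw [abs_mul, abs_of_pos hu]
      have : u * |τ| ≤ r := by rw [hr, ← hτ2]; nlinarith [sq_nonneg (u - |τ|), abs_nonneg τ]
      calc u * |D1| ≤ u * (e * |τ|) := by gcongr
        _ = e * (u * |τ|) := by ring
        _ ≤ e * r := by gcongr
    rw [hg, abs_mul, abs_of_pos hr0] at h1
    exact le_of_mul_le_mul_right h1 hr0
  have a1 := abs_le.1 ha1
  have f1 := abs_le.1 hf1
  have g1 := abs_le.1 hg1
  have n1 := abs_le.1 hN1
  have pm : 0 < a - g := by linarith
  have pp : 0 < a + g := by linarith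
  have key : (N0 + u * N1) / (D0 - u * D1) - (N0 - u * N1) / (D0 + u * D1) - 4 * (u / r) =
      (2 * (N1 * a + f) - 4 * (a ^ 2 - g ^ 2)) / ((a - g) * (a + g)) * (u / r) := by
    have e1 : D0 - u * D1 = (a - g) * r := by rw [ha, hg]; ring
    have e2 : D0 + u * D1 = (a + g) * r := by rw [ha, hg]; ring
    have e3 : N0 * g = f * u := by
      have : N0 * g * r = f * u * r := by
        calc N0 * g * r = N0 * (g * r) := by ring
          _ = u * (N0 * D1) := by rw [← hg]; ring
          _ = f * u * r := by rw [hf]; ring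
      exact mul_right_cancel₀ hr0.ne' this
    rw [e1, e2]
    field_simp
    linear_combination 2 * e3
  rw [key, abs_mul, abs_of_pos (div_pos hu hr0)]
  refine mul_le_mul_of_nonneg_right ?_ (div_pos hu hr0).le
  rw [abs_div, abs_of_pos (mul_pos pm pp), div_le_iff₀ (mul_pos pm pp)]
  clear key hf hg ha hf1 hg1 ha1 hN0 hD1 hN1 hD0 hτ hτ2
  have hε : 5 * l * e ≤ ε * (l ^ 2 / 8) := by
    have := mul_le_mul_of_nonneg_right he2 (by positivity : 0 ≤ l / 8)
    linarith [this]
  have hε0 : 0 < ε := by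
    have h : 0 < ε * l := by linarith
    exact pos_of_mul_pos_left h hl.le
  have hprod : l ^ 2 / 8 ≤ (a - g) * (a + g) := by
    have h1 : l / 4 ≤ a - g := by linarith
    have h2 : l / 4 ≤ a + g := by linarith
    have h3 : g ^ 2 ≤ e ^ 2 := sq_le_sq' g1.1 g1.2
    have h4 : e ^ 2 ≤ (l / 8) ^ 2 := by gcongr
    have h5 : (3 * l / 8) ^ 2 ≤ a ^ 2 := by
      apply pow_le_pow_left₀ <;> linarith
    have h6 : (a - g) * (a + g) = a ^ 2 - g ^ 2 := by ring
    have h7 := sq_nonneg l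
    have h8 : (3 * l / 8) ^ 2 = 9 / 64 * l ^ 2 := by ring
    have h9 : (l / 8) ^ 2 = 1 / 64 * l ^ 2 := by ring
    linarith
  refine le_trans ?_ (hε.trans (mul_le_mul_of_nonneg_left hprod hε0.le))
  have hg2 : g ^ 2 ≤ e ^ 2 := sq_le_sq' g1.1 g1.2
  have he22 : e ^ 2 ≤ e * (l / 8) := by nlinarith
  have hs : |N1 - 2 * a| ≤ 3 * e := by rw [abs_le]; constructor <;> linarith
  have hsa : |2 * a * (N1 - 2 * a)| ≤ (5 * l / 4) * (3 * e) := by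
    rw [abs_mul]
    have : |2 * a| ≤ 5 * l / 4 := by rw [abs_le]; constructor <;> linarith
    gcongr
  have hsa' := abs_le.1 hsa
  have e5 : 2 * (N1 * a + f) - 4 * (a ^ 2 - g ^ 2) = 2 * a * (N1 - 2 * a) + 2 * f + 4 * g ^ 2 := by
    ring
  have hle : e * (l / 8) = l * e / 8 := by ring
  have hle2 : (5 * l / 4) * (3 * e) = 15 / 4 * (l * e) := by ring
  have hle3 : 0 ≤ l * e := by positivity
  have hle4 : 5 * l * e = 5 * (l * e) := by ring
  have hg3 := sq_nonneg g
  rw [e5, abs_le, hle4]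
  rw [hle2] at hsa'
  rw [hle] at he22
  obtain ⟨q1, q2⟩ := hsa'
  obtain ⟨q3, q4⟩ := f1
  constructor <;> linarith

lemma cross3_norm_le (x y : E3) : ‖cross3 x y‖ ≤ ‖x‖ * ‖y‖ := by
  apply le_of_sq_le_sq _ (by positivity)
  rw [cross3_norm_sq]; nlinarith [sq_nonneg ⟪x, y⟫]

lemma norm_cross_of_perp (b d : E3) (hb : ‖b‖ = 1) (h : ⟪b, d⟫ = 0) : ‖cross3 b d‖ = ‖d‖ := by
  have := cross3_norm_sq b d
  rw [hb, h] at this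
  have h2 : ‖cross3 b d‖ ^ 2 = ‖d‖ ^ 2 := by linarith
  exact (pow_left_inj₀ (norm_nonneg _) (norm_nonneg _) two_ne_zero).1 h2

lemma sqrt_est (l u w e : ℝ) (hw0 : 0 ≤ w) (hw : w ^ 2 = 1 + u ^ 2 * l) (hl : 0 < l)
    (hu : u ^ 2 * l ^ 2 ≤ e) : |w - 1 - l / 2 * u ^ 2| ≤ e * u ^ 2 := by
  have h1 : 1 ≤ w := by nlinarith [sq_nonneg u, mul_nonneg (sq_nonneg u) hl.le]
  have h2 : w - 1 ≤ u ^ 2 * l / 2 := by nlinarith [sq_nonneg (w - 1)]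
  have h3 : w - 1 - l / 2 * u ^ 2 = - ((w - 1) ^ 2 / 2) := by linarith [hw, sq (w - 1)]
  rw [h3, abs_neg, abs_of_nonneg (by positivity)]
  have h4 : (w - 1) ^ 2 ≤ (u ^ 2 * l / 2) ^ 2 := by
    apply pow_le_pow_left₀ (by linarith) h2
  nlinarith [sq_nonneg u, mul_le_mul_of_nonneg_left hu (sq_nonneg u), mul_nonneg (sq_nonneg u) (sq_nonneg (u * l))]

lemma jump_near (β : ℝ → E3) (hβC1 : ContDiff ℝ 1 β)
    (hsph : ∀ t ∈ Set.Icc (0:ℝ) 1, ‖β t‖ = 1) (t0 : ℝ) (ht0 : t0 ∈ Set.Ioo (0:ℝ) 1)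
    (hreg : deriv β t0 ≠ 0) (ε : ℝ) (hε : 0 < ε) :
    ∃ δ > 0, ∀ t, |t - t0| < δ → ∀ u, 0 < u → u < δ →
      |Kf β (β t0 + u • cross3 (β t0) (deriv β t0)) t
        - Kf β (β t0 - u • cross3 (β t0) (deriv β t0)) t - 4 * (u / (u ^ 2 + (t - t0) ^ 2))|
      ≤ ε * (u / (u ^ 2 + (t - t0) ^ 2)) := by
  have ht0' : t0 ∈ Set.Icc (0:ℝ) 1 := Set.Ioo_subset_Icc_self ht0
  have hβc : Continuous β := hβC1.continuous
  have hβ'c : Continuous (deriv β) := hβC1.continuous_deriv (by norm_num)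
  have hd : HasDerivAt β (deriv β t0) t0 := (hβC1.differentiable (by norm_num) t0).hasDerivAt
  have hperp := inner_deriv_zero β hβC1 hsph t0 ht0'
  set b := β t0 with hb
  set d := deriv β t0 with hd'
  set n := cross3 b d with hn
  set ℓ := ‖d‖ with hℓ
  have hbn : ‖b‖ = 1 := hsph t0 ht0'
  have hℓ0 : 0 < ℓ := norm_pos_iff.2 hreg
  have hnn : ‖n‖ = ℓ := norm_cross_of_perp b d hbn hperp
  obtain ⟨e, he, he1, he2⟩ : ∃ e > 0, e ≤ ℓ ^ 2 / 8 ∧ 40 * e ≤ ε * ℓ ^ 2 := by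
    refine ⟨min (ℓ ^ 2 / 8) (ε * ℓ ^ 2 / 40), by positivity, min_le_left _ _, ?_⟩
    have := min_le_right (ℓ ^ 2 / 8) (ε * ℓ ^ 2 / 40)
    linarith
  obtain ⟨e', he', he'1, he'2⟩ : ∃ e' > 0, e' ≤ 1 ∧ e' * (2 * ℓ + 1) ≤ e := by
    refine ⟨min 1 (e / (2 * ℓ + 1)), by positivity, min_le_left _ _, ?_⟩
    calc min 1 (e / (2 * ℓ + 1)) * (2 * ℓ + 1) ≤ (e / (2 * ℓ + 1)) * (2 * ℓ + 1) := by
          gcongr; exact min_le_right _ _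
      _ = e := by field_simp
  have ev1 : ∀ᶠ t in 𝓝 t0, ‖β t - b - (t - t0) • d‖ ≤ e' * ‖t - t0‖ :=
    (hasDerivAt_iff_isLittleO.1 hd).bound he'
  have ev2 : ∀ᶠ t in 𝓝 t0, ‖deriv β t - d‖ ≤ e' := by
    have : Tendsto (fun t => ‖deriv β t - d‖) (𝓝 t0) (𝓝 ‖deriv β t0 - d‖) :=
      ((hβ'c.sub continuous_const).norm).tendsto t0
    rw [← hd', sub_self, norm_zero] at this
    exact this.eventually (ge_mem_nhds he')
  have ev3 : ∀ᶠ t in 𝓝 t0, |⟪n, cross3 (β t) (deriv β t)⟫ - ℓ ^ 2| ≤ e := by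
    have : Tendsto (fun t => |⟪n, cross3 (β t) (deriv β t)⟫ - ℓ ^ 2|) (𝓝 t0)
        (𝓝 |⟪n, cross3 (β t0) (deriv β t0)⟫ - ℓ ^ 2|) :=
      (((continuous_const.inner (continuous_cross3 hβc hβ'c)).sub continuous_const).abs).tendsto t0
    rw [← hd', ← hb, ← hn, real_inner_self_eq_norm_sq, hnn, sub_self, abs_zero] at this
    exact this.eventually (ge_mem_nhds he)
  have ev4 : ∀ᶠ t in 𝓝 t0, t ∈ Set.Ioo (0:ℝ) 1 := isOpen_Ioo.mem_nhds ht0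
  obtain ⟨δ1, hδ1, H⟩ := Metric.eventually_nhds_iff.1 (ev1.and (ev2.and (ev3.and ev4)))
  refine ⟨min δ1 (min 1 (e / (ℓ ^ 2) ^ 2)), by positivity, ?_⟩
  intro t ht u hu hu2
  obtain ⟨h1, h2, h3, h4⟩ := H (y := t) (by
    rw [Real.dist_eq]; exact ht.trans_le (min_le_left _ _))
  have hu1 : u < 1 := hu2.trans_le ((min_le_right _ _).trans (min_le_left _ _))
  have hue : u < e / (ℓ ^ 2) ^ 2 := hu2.trans_le ((min_le_right _ _).trans (min_le_right _ _))
  rw [Real.norm_eq_abs] at h1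
  set τ := t - t0 with hτ
  have hbt : ‖β t‖ = 1 := hsph t (Set.Ioo_subset_Icc_self h4)
  set R := β t - b - τ • d with hR
  have hβR : β t = b + τ • d + R := by rw [hR]; abel
  have nb : ⟪n, b⟫ = 0 := by rw [real_inner_comm]; exact inner_cross_left b d
  have nd : ⟪n, d⟫ = 0 := by rw [real_inner_comm]; exact inner_cross_right b d
  have bn : ⟪b, n⟫ = 0 := inner_cross_left b d
  have hw2 : ∀ s : ℝ, ‖b + s • n‖ ^ 2 = 1 + s ^ 2 * ℓ ^ 2 := by
    intro s
    rw [norm_add_sq_real, inner_smul_right, bn, norm_smul, mul_pow, hnn, hbn, Real.norm_eq_abs, sq_abs]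
    ring
  have hwm : ‖b - u • n‖ = ‖b + u • n‖ := by
    have h := hw2 (-u)
    rw [neg_smul, ← sub_eq_add_neg, neg_sq, ← hw2 u] at h
    exact (pow_left_inj₀ (norm_nonneg _) (norm_nonneg _) two_ne_zero).1 h
  set w := ‖b + u • n‖ with hw
  have hτ0 := abs_nonneg τ
  have heτ : ∀ c : ℝ, c ≤ 2 * ℓ + 1 → 0 ≤ c → e' * c ≤ e := fun c hc hc0 =>
    (mul_le_mul_of_nonneg_left hc he'.le).trans he'2
  have bD1 : |⟪n, β t⟫| ≤ e * |τ| := by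
    have : ⟪n, β t⟫ = ⟪n, R⟫ := by
      rw [hβR, inner_add_right, inner_add_right, inner_smul_right, nb, nd]; ring
    rw [this]
    calc |⟪n, R⟫| ≤ ‖n‖ * ‖R‖ := abs_real_inner_le_norm _ _
      _ ≤ ℓ * (e' * |τ|) := by rw [hnn]; gcongr
      _ = (e' * ℓ) * |τ| := by ring
      _ ≤ e * |τ| := by
        gcongr
        exact heτ ℓ (by linarith) hℓ0.le
  have bN0 : |⟪b, cross3 (β t) (deriv β t)⟫| ≤ e * |τ| := by
    have : ⟪b, cross3 (β t) (deriv β t)⟫ =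
        ⟪b, cross3 R (deriv β t)⟫ + τ * ⟪b, cross3 d (deriv β t - d)⟫ := by
      rw [hβR]
      generalize deriv β t = d1
      simp only [inner3, cross3_0, cross3_1, cross3_2, PiLp.add_apply, PiLp.sub_apply,
        PiLp.smul_apply, smul_eq_mul]
      ring
    have hdt : ‖deriv β t‖ ≤ ℓ + 1 := by
      calc ‖deriv β t‖ = ‖d + (deriv β t - d)‖ := by congr 1; abel
        _ ≤ ℓ + 1 := (norm_add_le _ _).trans (by gcongr; exact h2.trans he'1)
    rw [this]
    calc |⟪b, cross3 R (deriv β t)⟫ + τ * ⟪b, cross3 d (deriv β t - d)⟫|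
        ≤ |⟪b, cross3 R (deriv β t)⟫| + |τ| * |⟪b, cross3 d (deriv β t - d)⟫| := by
          rw [← abs_mul]; exact abs_add_le _ _
      _ ≤ ‖b‖ * (‖R‖ * ‖deriv β t‖) + |τ| * (‖b‖ * (‖d‖ * ‖deriv β t - d‖)) := by
          gcongr
          · exact (abs_real_inner_le_norm _ _).trans (by gcongr; exact cross3_norm_le _ _)
          · exact (abs_real_inner_le_norm _ _).trans (by gcongr; exact cross3_norm_le _ _)
      _ ≤ 1 * ((e' * |τ|) * (ℓ + 1)) + |τ| * (1 * (ℓ * e')) := by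
          rw [hbn]; gcongr
      _ = (e' * (2 * ℓ + 1)) * |τ| := by ring
      _ ≤ e * |τ| := by gcongr
  have bD0 : |1 - ⟪b, β t⟫ - ℓ ^ 2 / 2 * τ ^ 2| ≤ e * τ ^ 2 := by
    have h5 : ‖β t - b‖ ^ 2 = 2 - 2 * ⟪b, β t⟫ := by
      rw [norm_sub_sq_real, hbt, hbn, real_inner_comm]; ring
    have h6 : ‖β t - b‖ ^ 2 = τ ^ 2 * ℓ ^ 2 + 2 * τ * ⟪d, R⟫ + ‖R‖ ^ 2 := by
      have : β t - b = τ • d + R := by rw [hβR]; abel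
      rw [this, norm_add_sq_real, inner_smul_left, norm_smul, mul_pow, Real.norm_eq_abs, sq_abs]
      simp only [RCLike.conj_to_real]; ring
    have h7 : 1 - ⟪b, β t⟫ - ℓ ^ 2 / 2 * τ ^ 2 = τ * ⟪d, R⟫ + ‖R‖ ^ 2 / 2 := by linarith
    rw [h7]
    calc |τ * ⟪d, R⟫ + ‖R‖ ^ 2 / 2| ≤ |τ| * |⟪d, R⟫| + |‖R‖ ^ 2 / 2| := by
          rw [← abs_mul]; exact abs_add_le _ _
      _ = |τ| * |⟪d, R⟫| + ‖R‖ ^ 2 / 2 := by rw [abs_of_nonneg (a := ‖R‖ ^ 2 / 2) (by positivity)]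
      _ ≤ |τ| * (ℓ * (e' * |τ|)) + (e' * |τ|) ^ 2 / 2 := by
          gcongr
          exact (abs_real_inner_le_norm _ _).trans (by gcongr)
      _ = (e' * (ℓ + e' / 2)) * |τ| ^ 2 := by ring
      _ ≤ e * |τ| ^ 2 := by
          gcongr
          exact heτ _ (by linarith) (by positivity)
      _ = e * τ ^ 2 := by rw [sq_abs]
  have bw : |w - 1 - ℓ ^ 2 / 2 * u ^ 2| ≤ e * u ^ 2 := by
    refine sqrt_est (ℓ ^ 2) u w e (norm_nonneg _) (hw2 u) (by positivity) ?_
    rw [lt_div_iff₀ (by positivity)] at hue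
    have : u ^ 2 ≤ u := by nlinarith
    exact (mul_le_mul_of_nonneg_right this (by positivity)).trans hue.le
  have bD : |(w - ⟪b, β t⟫) - ℓ ^ 2 / 2 * (u ^ 2 + τ ^ 2)| ≤ e * (u ^ 2 + τ ^ 2) := by
    have : (w - ⟪b, β t⟫) - ℓ ^ 2 / 2 * (u ^ 2 + τ ^ 2) =
      (w - 1 - ℓ ^ 2 / 2 * u ^ 2) + (1 - ⟪b, β t⟫ - ℓ ^ 2 / 2 * τ ^ 2) := by ring
    rw [this, mul_add]
    exact (abs_add_le _ _).trans (add_le_add bw bD0)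
  have key := jump_alg (ℓ ^ 2) e ε u τ _ _ _ _ (by positivity) he he1 he2 hu bN0 bD1 h3 bD
  convert key using 4
  · simp only [Kf, inner_add_left, inner_smul_left, RCLike.conj_to_real]
    rw [← hw]; congr 1; ring
  · simp only [Kf, inner_sub_left, inner_smul_left, RCLike.conj_to_real]
    rw [hwm]; congr 1; ring


lemma Kf_contOn (β : ℝ → E3) (hβC1 : ContDiff ℝ 1 β) (x : E3) (hx : x ∈ Gd β) :
    ContinuousOn (Kf β x) (Set.Icc 0 1) := by
  have hβc : Continuous β := hβC1.continuous
  have hβ'c : Continuous (deriv β) := hβC1.continuous_deriv (by norm_num)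
  unfold Kf
  refine ContinuousOn.div ?_ ?_ ?_
  · exact (continuous_const.inner (continuous_cross3 hβc hβ'c)).continuousOn
  · exact (continuous_const.sub (continuous_const.inner hβc)).continuousOn
  · intro t ht
    have := hx t ht
    exact (sub_pos.2 this).ne'

lemma beta_ne (β : ℝ → E3) (hclosed : β 0 = β 1) (hsimple : Set.InjOn β (Set.Ico 0 1))
    (t0 : ℝ) (ht0 : t0 ∈ Set.Ioo (0:ℝ) 1) (t : ℝ) (ht : t ∈ Set.Icc (0:ℝ) 1) (hne : t ≠ t0) :
    β t ≠ β t0 := by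
  intro h
  rcases eq_or_lt_of_le ht.2 with h1 | h1
  · rw [h1, ← hclosed] at h
    exact ht0.1.ne (hsimple ⟨le_rfl, one_pos⟩ ⟨ht0.1.le, ht0.2⟩ h)
  · exact hne (hsimple ⟨ht.1, h1⟩ ⟨ht0.1.le, ht0.2⟩ h)

lemma unit_inner_lt (x y : E3) (hx : ‖x‖ = 1) (hy : ‖y‖ = 1) (h : x ≠ y) : ⟪x, y⟫ < 1 := by
  have h1 : ‖x - y‖ ^ 2 = 2 - 2 * ⟪x, y⟫ := by rw [norm_sub_sq_real, hx, hy]; ring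
  have h2 : 0 < ‖x - y‖ := norm_pos_iff.2 (sub_ne_zero.2 h)
  nlinarith [sq_nonneg ‖x - y‖, mul_pos h2 h2]

lemma jump_far (β : ℝ → E3) (hβC1 : ContDiff ℝ 1 β)
    (hsph : ∀ t ∈ Set.Icc (0:ℝ) 1, ‖β t‖ = 1) (hclosed : β 0 = β 1)
    (hsimple : Set.InjOn β (Set.Ico 0 1)) (t0 : ℝ) (ht0 : t0 ∈ Set.Ioo (0:ℝ) 1)
    (δ : ℝ) (hδ : 0 < δ) (ε : ℝ) (hε : 0 < ε) :
    ∃ η > (0:ℝ), ∀ u : ℝ, 0 < u → u < η → ∀ t ∈ Set.Icc (0:ℝ) 1, δ ≤ |t - t0| →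
      |Kf β (β t0 + u • cross3 (β t0) (deriv β t0)) t
        - Kf β (β t0 - u • cross3 (β t0) (deriv β t0)) t| ≤ ε := by
  have hβc : Continuous β := hβC1.continuous
  have hβ'c : Continuous (deriv β) := hβC1.continuous_deriv (by norm_num)
  have ht0' : t0 ∈ Set.Icc (0:ℝ) 1 := Set.Ioo_subset_Icc_self ht0
  set n := cross3 (β t0) (deriv β t0) with hn
  set T : Set ℝ := Set.Icc 0 1 ∩ {t | δ ≤ |t - t0|} with hT
  have hTc : IsCompact T := isCompact_Icc.inter_right
    (isClosed_le continuous_const (continuous_id.sub continuous_const).abs)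
  have hcont : ∀ s : ℝ, ∀ t ∈ T, ContinuousAt (fun z : ℝ × ℝ => Kf β (β t0 + (s * z.1) • n) z.2) (0, t) := by
    intro s t ht
    unfold Kf
    refine ContinuousAt.div ?_ ?_ ?_
    · exact (Continuous.inner (by fun_prop)
        ((continuous_cross3 hβc hβ'c).comp continuous_snd)).continuousAt
    · exact (Continuous.sub (by fun_prop) (Continuous.inner (by fun_prop) (by fun_prop))).continuousAt
    · have hne : t ≠ t0 := by
        rintro rfl
        have := ht.2
        simp only [Set.mem_ofPred_eq, sub_self, abs_zero] at this
        linarith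
      have := unit_inner_lt _ _ (hsph t0 ht0') (hsph t ht.1)
        (beta_ne β hclosed hsimple t0 ht0 t ht.1 hne).symm
      simp only [mul_zero, zero_smul, add_zero, hsph t0 ht0']
      linarith
  have hev := hTc.eventually_forall_of_forall_eventually (x₀ := (0:ℝ))
    (P := fun u t => |Kf β (β t0 + (1 * u) • n) t - Kf β (β t0 + ((-1) * u) • n) t| ≤ ε) (by
      intro t ht
      have h1 := ((hcont 1 t ht).sub (hcont (-1) t ht)).abs
      have h2 : Tendsto (fun z : ℝ × ℝ => |Kf β (β t0 + (1 * z.1) • n) z.2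
          - Kf β (β t0 + ((-1) * z.1) • n) z.2|) (𝓝 (0, t)) (𝓝 0) := by
        have h3 := h1.tendsto
        simpa using h3
      exact h2.eventually (ge_mem_nhds hε))
  obtain ⟨η, hη, H⟩ := Metric.eventually_nhds_iff.1 hev
  refine ⟨η, hη, fun u hu hu2 t ht htδ => ?_⟩
  have := H (y := u) (by rw [Real.dist_eq, sub_zero, abs_of_pos hu]; exact hu2) t ⟨ht, htδ⟩
  simpa [sub_eq_add_neg] using this

lemma arct_int (t0 u : ℝ) (hu : 0 < u) :
    ∫ t in (0:ℝ)..1, u / (u ^ 2 + (t - t0) ^ 2) =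
      Real.arctan ((1 - t0) / u) + Real.arctan (t0 / u) := by
  have hpos : ∀ t : ℝ, 0 < u ^ 2 + (t - t0) ^ 2 := fun t => by positivity
  rw [intervalIntegral.integral_eq_sub_of_hasDerivAt (f := fun t => Real.arctan ((t - t0) / u))]
  · have : (0 - t0) / u = - (t0 / u) := by ring
    simp only [this, Real.arctan_neg]; ring
  · intro t _
    have h := (((hasDerivAt_id t).sub_const t0).div_const u).arctan
    have := hpos t
    have e : u / (u ^ 2 + (t - t0) ^ 2) = 1 / (1 + ((t - t0) / u) ^ 2) * (1 / u) := by
      field_simp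
    rw [e]
    exact h
  · apply Continuous.intervalIntegrable
    exact continuous_const.div (by fun_prop) (fun t => (hpos t).ne')

lemma arct_tendsto (t0 : ℝ) (ht0 : t0 ∈ Set.Ioo (0:ℝ) 1) (ε : ℝ) (hε : 0 < ε) :
    ∃ η > (0:ℝ), ∀ u : ℝ, 0 < u → u < η →
      |(∫ t in (0:ℝ)..1, u / (u ^ 2 + (t - t0) ^ 2)) - Real.pi| ≤ ε := by
  have hc : ∀ c : ℝ, 0 < c → Tendsto (fun u : ℝ => Real.arctan (c / u)) (𝓝[>] 0) (𝓝 (Real.pi / 2)) := by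
    intro c hc
    have h1 : Tendsto (fun u : ℝ => c / u) (𝓝[>] 0) atTop :=
      (tendsto_inv_nhdsGT_zero (𝕜 := ℝ)).const_mul_atTop hc
    exact (Real.tendsto_arctan_atTop.mono_right nhdsWithin_le_nhds).comp h1
  have h := (hc (1 - t0) (by linarith [ht0.2])).add (hc t0 ht0.1)
  rw [add_halves] at h
  obtain ⟨η, hη, H⟩ := Metric.tendsto_nhdsWithin_nhds.1 h ε hε
  refine ⟨η, hη, fun u hu hu2 => ?_⟩
  rw [arct_int t0 u hu]
  have := H (x := u) hu (by rw [Real.dist_eq, sub_zero, abs_of_pos hu]; exact hu2)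
  rw [Real.dist_eq] at this
  exact this.le

lemma jump (β : ℝ → E3) (hβC1 : ContDiff ℝ 1 β)
    (hsph : ∀ t ∈ Set.Icc (0:ℝ) 1, ‖β t‖ = 1) (hclosed : β 0 = β 1)
    (hsimple : Set.InjOn β (Set.Ico 0 1)) (t0 : ℝ) (ht0 : t0 ∈ Set.Ioo (0:ℝ) 1)
    (hreg : deriv β t0 ≠ 0) (ε : ℝ) (hε : 0 < ε) :
    ∃ η > (0:ℝ), ∀ u : ℝ, 0 < u → u < η →
      β t0 + u • cross3 (β t0) (deriv β t0) ∈ Gd β →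
      β t0 - u • cross3 (β t0) (deriv β t0) ∈ Gd β →
      |Ff β (β t0 + u • cross3 (β t0) (deriv β t0))
        - Ff β (β t0 - u • cross3 (β t0) (deriv β t0)) - 4 * Real.pi| ≤ ε := by
  have hpi := Real.pi_pos
  have hpi4 := Real.pi_le_four
  obtain ⟨ε1, hε1, hε1'⟩ : ∃ e > (0:ℝ), 20 * e ≤ ε ∧ e ≤ 1 :=
    ⟨min (ε / 20) 1, by positivity, by linarith [min_le_left (ε / 20) 1], min_le_right _ _⟩
  obtain ⟨δ, hδ, hnear⟩ := jump_near β hβC1 hsph t0 ht0 hreg ε1 hε1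
  obtain ⟨η1, hη1, hfar⟩ := jump_far β hβC1 hsph hclosed hsimple t0 ht0 δ hδ ε1 hε1
  obtain ⟨η2, hη2, harc⟩ := arct_tendsto t0 ht0 ε1 hε1
  refine ⟨min (min δ η1) (min η2 (ε1 * δ ^ 2 / 4)), by positivity, ?_⟩
  intro u hu hu2 hp hm
  have u1 : u < δ := hu2.trans_le ((min_le_left _ _).trans (min_le_left _ _))
  have u2 : u < η1 := hu2.trans_le ((min_le_left _ _).trans (min_le_right _ _))
  have u3 : u < η2 := hu2.trans_le ((min_le_right _ _).trans (min_le_left _ _))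
  have u4 : u < ε1 * δ ^ 2 / 4 := hu2.trans_le ((min_le_right _ _).trans (min_le_right _ _))
  have hA := abs_le.1 (harc u hu u3)
  set n := cross3 (β t0) (deriv β t0) with hn
  have hpos : ∀ t : ℝ, 0 < u ^ 2 + (t - t0) ^ 2 := fun t => by positivity
  have hkc : Continuous (fun t : ℝ => u / (u ^ 2 + (t - t0) ^ 2)) :=
    continuous_const.div (by fun_prop) (fun t => (hpos t).ne')
  have hki : IntervalIntegrable (fun t : ℝ => u / (u ^ 2 + (t - t0) ^ 2)) volume 0 1 :=
    hkc.intervalIntegrable _ _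
  have hip : IntervalIntegrable (Kf β (β t0 + u • n)) volume 0 1 := by
    apply ContinuousOn.intervalIntegrable
    rw [Set.uIcc_of_le zero_le_one]; exact Kf_contOn β hβC1 _ hp
  have him : IntervalIntegrable (Kf β (β t0 - u • n)) volume 0 1 := by
    apply ContinuousOn.intervalIntegrable
    rw [Set.uIcc_of_le zero_le_one]; exact Kf_contOn β hβC1 _ hm
  have hpt : ∀ t ∈ Set.Icc (0:ℝ) 1,
      |Kf β (β t0 + u • n) t - Kf β (β t0 - u • n) t - 4 * (u / (u ^ 2 + (t - t0) ^ 2))|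
        ≤ ε1 * (u / (u ^ 2 + (t - t0) ^ 2)) + 2 * ε1 := by
    intro t ht
    by_cases htδ : |t - t0| < δ
    · exact (hnear t htδ u hu u1).trans (by linarith)
    · push Not at htδ
      have h1 := abs_le.1 (hfar u hu u2 t ht htδ)
      have h2 : 4 * (u / (u ^ 2 + (t - t0) ^ 2)) ≤ ε1 := by
        have h3 : δ ^ 2 ≤ (t - t0) ^ 2 := by
          rw [← sq_abs (t - t0)]; gcongr
        rw [← mul_div_assoc, div_le_iff₀ (hpos t)]
        have h4 : ε1 * δ ^ 2 ≤ ε1 * (u ^ 2 + (t - t0) ^ 2) := by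
          gcongr; linarith [sq_nonneg u]
        linarith
      have h5 : 0 < u / (u ^ 2 + (t - t0) ^ 2) := div_pos hu (hpos t)
      have h6 := mul_pos hε1 h5
      rw [abs_le]
      constructor <;> linarith
  have hmain := intervalIntegral.norm_integral_le_of_norm_le (μ := volume) (zero_le_one' ℝ)
    (f := fun t => Kf β (β t0 + u • n) t - Kf β (β t0 - u • n) t - 4 * (u / (u ^ 2 + (t - t0) ^ 2)))
    (g := fun t => ε1 * (u / (u ^ 2 + (t - t0) ^ 2)) + 2 * ε1)
    (Filter.Eventually.of_forall fun t ht => hpt t (Set.Ioc_subset_Icc_self ht))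
    ((hki.const_mul _).add intervalIntegrable_const)
  rw [intervalIntegral.integral_sub (hip.sub him) (hki.const_mul _),
    intervalIntegral.integral_sub hip him, intervalIntegral.integral_const_mul,
    intervalIntegral.integral_add (hki.const_mul _) intervalIntegrable_const,
    intervalIntegral.integral_const_mul, intervalIntegral.integral_const, Real.norm_eq_abs] at hmain
  simp only [sub_zero, one_smul] at hmain
  change |Ff β (β t0 + u • n) - Ff β (β t0 - u • n) - _| ≤ _ at hmain
  set A := ∫ t in (0:ℝ)..1, u / (u ^ 2 + (t - t0) ^ 2) with hAdef
  have hA5 : ε1 * A ≤ ε1 * 5 := by gcongr; linarith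
  have := abs_le.1 hmain
  rw [abs_le]
  constructor <;> linarith

lemma deriv_right_nonpos (f : ℝ → ℝ) (f' : ℝ) (h : HasDerivAt f f' 0)
    (hm : ∀ t ∈ Set.Icc (0:ℝ) 1, f t ≤ f 0) : f' ≤ 0 := by
  have h1 : Tendsto (slope f 0) (𝓝[>] 0) (𝓝 f') :=
    (hasDerivWithinAt_iff_tendsto_slope' (Set.self_notMem_Ioi)).1 h.hasDerivWithinAt
  refine le_of_tendsto h1 ?_
  filter_upwards [Ioo_mem_nhdsGT (zero_lt_one' ℝ)] with t ht
  rw [slope_def_field]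
  exact div_nonpos_of_nonpos_of_nonneg (by linarith [hm t ⟨ht.1.le, ht.2.le⟩]) (by linarith [ht.1])

lemma deriv_left_nonneg (f : ℝ → ℝ) (f' : ℝ) (h : HasDerivAt f f' 1)
    (hm : ∀ t ∈ Set.Icc (0:ℝ) 1, f t ≤ f 1) : 0 ≤ f' := by
  have h1 : Tendsto (slope f 1) (𝓝[<] 1) (𝓝 f') :=
    (hasDerivWithinAt_iff_tendsto_slope' (Set.self_notMem_Iio)).1 h.hasDerivWithinAt
  refine ge_of_tendsto h1 ?_
  filter_upwards [Ioo_mem_nhdsLT (zero_lt_one' ℝ)] with t ht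
  rw [slope_def_field]
  exact div_nonneg_of_nonpos (by linarith [hm t ⟨ht.1.le, ht.2.le⟩]) (by linarith [ht.2])

lemma exists_foot (β : ℝ → E3) (hβC1 : ContDiff ℝ 1 β)
    (hclosed : β 0 = β 1) (hclosed' : deriv β 0 = deriv β 1) (x : E3)
    (hx : ⟪x, deriv β 0⟫ ≠ 0) :
    ∃ t0 ∈ Set.Ioo (0:ℝ) 1, (∀ t ∈ Set.Icc (0:ℝ) 1, ⟪x, β t⟫ ≤ ⟪x, β t0⟫) ∧
      ⟪x, deriv β t0⟫ = 0 := by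
  have hβc : Continuous β := hβC1.continuous
  have hd : ∀ t, HasDerivAt (fun s => ⟪x, β s⟫) ⟪x, deriv β t⟫ t := fun t => by
    have h := (hasDerivAt_const t x).inner ℝ (hβC1.differentiable (by norm_num) t).hasDerivAt
    simpa using h
  obtain ⟨t0, ht0, hmax⟩ := isCompact_Icc.exists_isMaxOn (Set.nonempty_Icc.2 (zero_le_one' ℝ))
    (f := fun s => ⟪x, β s⟫) (continuous_const.inner hβc).continuousOn
  have hm : ∀ t ∈ Set.Icc (0:ℝ) 1, ⟪x, β t⟫ ≤ ⟪x, β t0⟫ := fun t ht => hmax ht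
  by_cases hI : t0 ∈ Set.Ioo (0:ℝ) 1
  · refine ⟨t0, hI, hm, ?_⟩
    refine IsLocalMax.hasDerivAt_eq_zero ?_ (hd t0)
    filter_upwards [isOpen_Ioo.mem_nhds hI] with t ht using hm t (Set.Ioo_subset_Icc_self ht)
  · exfalso
    have h0 : ⟪x, β t0⟫ = ⟪x, β 0⟫ := by
      rcases eq_or_lt_of_le ht0.1 with h | h
      · rw [← h]
      · rcases eq_or_lt_of_le ht0.2 with h' | h'
        · rw [h', hclosed]
        · exact absurd ⟨h, h'⟩ hI
    have a1 := deriv_right_nonpos _ _ (hd 0) (fun t ht => by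
      rw [← h0]; exact hm t ht)
    have a2 := deriv_left_nonneg _ _ (hd 1) (fun t ht => by
      rw [← hclosed, ← h0]; exact hm t ht)
    rw [← hclosed'] at a2
    exact hx (le_antisymm a1 a2)

lemma foot_decomp (b d x : E3) (hb : ‖b‖ = 1) (hbd : ⟪b, d⟫ = 0) (hd : d ≠ 0) (hx : ⟪x, d⟫ = 0) :
    ∃ c : ℝ, x = ⟪x, b⟫ • b + c • cross3 b d := by
  have h := dual_expand (cross3 b d) b d x
  have h1 : cross3 d (cross3 b d) = (‖d‖ ^ 2) • b - ⟪b, d⟫ • d := by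
    rw [← real_inner_self_eq_norm_sq]
    apply E3_ext <;> simp only [inner3, cross3_0, cross3_1, cross3_2, PiLp.sub_apply,
      PiLp.smul_apply, smul_eq_mul] <;> ring
  have hd0 : ‖d‖ ≠ 0 := norm_ne_zero_iff.2 hd
  rw [hx, h1, hbd, real_inner_self_eq_norm_sq, norm_cross_of_perp b d hb hbd] at h
  refine ⟨⟪x, cross3 b d⟫ / ‖d‖ ^ 2, ?_⟩
  have h2 : x = (‖d‖ ^ 2)⁻¹ • (‖d‖ ^ 2 • x) := by
    rw [smul_smul, inv_mul_cancel₀ (pow_ne_zero 2 hd0), one_smul]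
  conv_lhs => rw [h2, h]
  simp only [zero_smul, sub_zero, add_zero, smul_add, smul_smul]
  rw [add_comm]
  congr 2
  · field_simp
  · field_simp

lemma foot_path (β : ℝ → E3) (hβC1 : ContDiff ℝ 1 β)
    (hsph : ∀ t ∈ Set.Icc (0:ℝ) 1, ‖β t‖ = 1)
    (hreg : ∀ t ∈ Set.Icc (0:ℝ) 1, deriv β t ≠ 0)
    (hclosed : β 0 = β 1) (hclosed' : deriv β 0 = deriv β 1)
    (hsimple : Set.InjOn β (Set.Ico 0 1)) (x : E3) (hxG : x ∈ Gd β)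
    (hx : ⟪x, deriv β 0⟫ ≠ 0) :
    ∃ t0 ∈ Set.Ioo (0:ℝ) 1, ∃ C : Set E3, IsPreconnected C ∧ C ⊆ Gd β ∧ x ∈ C ∧
      ∃ u0 > (0:ℝ), (∀ u : ℝ, 0 < u → u < u0 → β t0 + u • cross3 (β t0) (deriv β t0) ∈ C) ∨
        (∀ u : ℝ, 0 < u → u < u0 → β t0 - u • cross3 (β t0) (deriv β t0) ∈ C) := by
  obtain ⟨t0, ht0, hmax, hperp⟩ := exists_foot β hβC1 hclosed hclosed' x hx
  have ht0' : t0 ∈ Set.Icc (0:ℝ) 1 := Set.Ioo_subset_Icc_self ht0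
  have hbd := inner_deriv_zero β hβC1 hsph t0 ht0'
  have hb1 := hsph t0 ht0'
  obtain ⟨c, hc⟩ := foot_decomp (β t0) (deriv β t0) x hb1 hbd (hreg t0 ht0') hperp
  have hnn : ‖cross3 (β t0) (deriv β t0)‖ = ‖deriv β t0‖ := norm_cross_of_perp _ _ hb1 hbd
  have hn0 : 0 < ‖cross3 (β t0) (deriv β t0)‖ := by rw [hnn]; exact norm_pos_iff.2 (hreg t0 ht0')
  have bn : ⟪β t0, cross3 (β t0) (deriv β t0)⟫ = 0 := inner_cross_left _ _
  set n := cross3 (β t0) (deriv β t0) with hn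
  set a := ⟪x, β t0⟫ with ha
  have hnorm : ∀ p q : ℝ, ‖p • β t0 + q • n‖ ^ 2 = p ^ 2 + q ^ 2 * ‖n‖ ^ 2 := by
    intro p q
    rw [norm_add_sq_real, inner_smul_left, inner_smul_right, bn, norm_smul, norm_smul, mul_pow,
      mul_pow, hb1, Real.norm_eq_abs, Real.norm_eq_abs, sq_abs, sq_abs]
    ring
  have hc0 : c ≠ 0 := by
    intro h0
    rw [h0, zero_smul, add_zero] at hc
    have hax : ‖x‖ = |a| := by rw [hc, norm_smul, hb1, mul_one, Real.norm_eq_abs]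
    have hlt : a < ‖x‖ := hxG t0 ht0'
    have ha0 : a < 0 := by
      by_contra h
      push Not at h
      rw [hax, abs_of_nonneg h] at hlt
      exact lt_irrefl _ hlt
    have h00 : (0:ℝ) ∈ Set.Icc (0:ℝ) 1 := ⟨le_rfl, zero_le_one⟩
    have h1 := hmax 0 h00
    have h2 := unit_inner_lt _ _ (hsph 0 h00) hb1
      (beta_ne β hclosed hsimple t0 ht0 0 h00 ht0.1.ne)
    have h3 : ⟪x, β 0⟫ = a * ⟪β 0, β t0⟫ := by
      conv_lhs => rw [hc]
      rw [inner_smul_left, real_inner_comm]; rfl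
    rw [h3] at h1
    nlinarith
  have hcabs : 0 < |c| := abs_pos.2 hc0
  let C : Set E3 := {z | ∃ p r : ℝ, 0 < p ∧ 0 ≤ r ∧ z = p • x + r • β t0}
  have hCconv : Convex ℝ C := by
    rintro z ⟨p, r, hp, hr, rfl⟩ w ⟨p', r', hp', hr', rfl⟩ s s' hs hs' hss
    refine ⟨s * p + s' * p', s * r + s' * r', ?_, by positivity, by module⟩
    rcases eq_or_lt_of_le hs with h | h
    · have : s' = 1 := by linarith
      rw [← h, this]; linarith
    · have := mul_pos h hp
      have := mul_nonneg hs' hp'.le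
      linarith
  have hmem : ∀ σ : ℝ, 0 < σ * c → |σ| = 1 → ∀ u, 0 < u → u < |c| / (|a| + 1) →
      β t0 + (σ * u) • n ∈ C := by
    intro σ hσ hσ1 u hu hu2
    rw [lt_div_iff₀ (by positivity)] at hu2
    have hσc : σ * c = |c| := by
      rw [← abs_of_pos hσ, abs_mul, hσ1, one_mul]
    have hσσ : σ * σ = 1 := by
      rw [← abs_mul_abs_self, hσ1, one_mul]
    refine ⟨u / |c|, 1 - u / |c| * a, by positivity, ?_, ?_⟩
    · have h1 : u / |c| * a ≤ 1 := by
        rw [div_mul_eq_mul_div, div_le_one hcabs]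
        have := mul_le_mul_of_nonneg_left (le_abs_self a) hu.le
        linarith
      linarith
    · have h2 : u / |c| * c = σ * u := by
        rw [← hσc]
        have hs0 : σ ≠ 0 := by rintro rfl; simp at hσσ
        field_simp
        rw [sq, hσσ]
      conv_rhs => rw [hc]
      rw [smul_add, smul_smul, smul_smul, h2]
      module
  refine ⟨t0, ht0, C, hCconv.isPreconnected, ?_, ⟨1, 0, one_pos, le_rfl, by simp⟩,
    |c| / (|a| + 1), by positivity, ?_⟩
  · rintro z ⟨p, r, hp, hr, rfl⟩ t ht
    have h1 : ⟪p • x + r • β t0, β t⟫ ≤ p * a + r := by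
      rw [inner_add_left, inner_smul_left, inner_smul_left]
      simp only [RCLike.conj_to_real]
      have h2 : ⟪β t0, β t⟫ ≤ 1 := by
        have := real_inner_le_norm (β t0) (β t)
        rwa [hb1, hsph t ht, one_mul] at this
      have h3 := mul_le_mul_of_nonneg_left (hmax t ht) hp.le
      have h4 := mul_le_mul_of_nonneg_left h2 hr
      linarith
    have h5 : p • x + r • β t0 = (p * a + r) • β t0 + (p * c) • n := by
      conv_lhs => rw [hc]
      module
    refine h1.trans_lt ?_
    rw [h5]
    have h6 := hnorm (p * a + r) (p * c)
    have h7 : 0 < (p * c) ^ 2 * ‖n‖ ^ 2 := by positivity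
    exact lt_of_pow_lt_pow_left₀ 2 (norm_nonneg _) (by linarith)
  · rcases lt_or_gt_of_ne hc0 with h | h
    · right
      intro u hu hu2
      have := hmem (-1) (by linarith) (by simp) u hu hu2
      rwa [neg_one_mul, neg_smul, ← sub_eq_add_neg] at this
    · left
      intro u hu hu2
      have := hmem 1 (by linarith) (by simp) u hu hu2
      rwa [one_mul] at this

/-- The open cone over a subset of the sphere. -/
def Shat (S : Set E3) : Set E3 := {x | x ≠ 0 ∧ ‖x‖⁻¹ • x ∈ S}

lemma Shat_open_of (O : Set E3) (hO : IsOpen O) : IsOpen (Shat O) := by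
  have h : ContinuousOn (fun x : E3 => ‖x‖⁻¹ • x) {x | x ≠ 0} := by
    refine ContinuousOn.smul (f := fun x : E3 => ‖x‖⁻¹) (ContinuousOn.inv₀ continuous_norm.continuousOn ?_) continuousOn_id
    intro x hx
    exact norm_ne_zero_iff.2 hx
  exact h.isOpen_inter_preimage isOpen_ne hO

lemma unit_norm (x : E3) (hx : x ≠ 0) : ‖‖x‖⁻¹ • x‖ = 1 := by
  rw [norm_smul, norm_inv, norm_norm, inv_mul_cancel₀ (norm_ne_zero_iff.2 hx)]

lemma Shat_open (S O : Set E3) (hO : IsOpen O) (hS : S = O ∩ Metric.sphere (0:E3) 1) :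
    IsOpen (Shat S) := by
  have : Shat S = Shat O := by
    ext x
    constructor
    · rintro ⟨h1, h2⟩
      rw [hS] at h2
      exact ⟨h1, h2.1⟩
    · rintro ⟨h1, h2⟩
      refine ⟨h1, ?_⟩
      rw [hS]
      exact ⟨h2, by rw [mem_sphere_zero_iff_norm]; exact unit_norm x h1⟩
  rw [this]
  exact Shat_open_of O hO

lemma Shat_sub_Gd (S : Set E3) (β : ℝ → E3)
    (hsph : ∀ t ∈ Set.Icc (0:ℝ) 1, ‖β t‖ = 1)
    (hbdry : β '' Set.Icc 0 1 = closure S \ S) : Shat S ⊆ Gd β := by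
  rintro x ⟨hx, hxS⟩
  have h : ‖x‖⁻¹ • x ∈ Gd β := by
    intro t ht
    rw [unit_norm x hx]
    refine unit_inner_lt _ _ (unit_norm x hx) (hsph t ht) ?_
    intro he
    have : β t ∈ closure S \ S := hbdry ▸ Set.mem_image_of_mem β ht
    exact this.2 (he ▸ hxS)
  have h2 := Gd_smul h (norm_pos_iff.2 hx)
  rwa [smul_smul, mul_inv_cancel₀ (norm_ne_zero_iff.2 hx), one_smul] at h2

lemma Gd_sub_union (S : Set E3) (β : ℝ → E3)
    (hbdry : β '' Set.Icc 0 1 = closure S \ S) :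
    Gd β ⊆ Shat S ∪ Shat (closure S)ᶜ := by
  intro x hx
  have hx0 := Gd_ne_zero hx
  have hn := norm_pos_iff.2 hx0
  by_cases h1 : ‖x‖⁻¹ • x ∈ closure S
  · by_cases h2 : ‖x‖⁻¹ • x ∈ S
    · exact Or.inl ⟨hx0, h2⟩
    · exfalso
      have : ‖x‖⁻¹ • x ∈ β '' Set.Icc 0 1 := by rw [hbdry]; exact ⟨h1, h2⟩
      obtain ⟨t, ht, he⟩ := this
      have h3 := hx t ht
      rw [he, inner_smul_right, real_inner_self_eq_norm_sq, sq, inv_mul_cancel_left₀ hn.ne'] at h3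
      exact lt_irrefl _ h3
  · exact Or.inr ⟨hx0, h1⟩

lemma Ff_values
    (S : Set E3) (hSsph : S ⊆ Metric.sphere (0:E3) 1)
    (O : Set E3) (hO : IsOpen O) (hSO : S = O ∩ Metric.sphere (0:E3) 1)
    (hSconn : IsPreconnected S)
    (β : ℝ → E3) (hβC1 : ContDiff ℝ 1 β)
    (hsph : ∀ t ∈ Set.Icc (0:ℝ) 1, ‖β t‖ = 1)
    (hreg : ∀ t ∈ Set.Icc (0:ℝ) 1, deriv β t ≠ 0)
    (hclosed : β 0 = β 1) (hclosed' : deriv β 0 = deriv β 1)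
    (hsimple : Set.InjOn β (Set.Ico 0 1))
    (hbdry : β '' Set.Icc 0 1 = closure S \ S)
    (horient : ∀ t ∈ Set.Icc (0:ℝ) 1, ∃ ε > (0:ℝ), ∀ s ∈ Set.Ioo (0:ℝ) ε,
      (‖β t + s • cross3 (β t) (deriv β t)‖⁻¹ : ℝ) •
        (β t + s • cross3 (β t) (deriv β t)) ∈ S)
    (hmod : ∀ x ∈ Gd β, ∀ y ∈ Gd β, ∃ n : ℤ, Ff β x = Ff β y + n * (2 * Real.pi))
    (q0 : E3) (hq0 : q0 ∈ S) (x : E3) (hxG : x ∈ Gd β) (hx : ⟪x, deriv β 0⟫ ≠ 0) :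
    (x ∈ Shat S ∧ Ff β x = Ff β q0) ∨ (x ∉ Shat S ∧ Ff β x = Ff β q0 - 4 * Real.pi) := by
  have hSG := Shat_sub_Gd S β hsph hbdry
  have hSS : S ⊆ Shat S := by
    intro y hy
    have h1 : ‖y‖ = 1 := mem_sphere_zero_iff_norm.1 (hSsph hy)
    refine ⟨norm_ne_zero_iff.1 (by rw [h1]; exact one_ne_zero), ?_⟩
    rw [h1, inv_one, one_smul]; exact hy
  have hS0 : (0:E3) ∉ S := fun h => by
    have := mem_sphere_zero_iff_norm.1 (hSsph h)
    rw [norm_zero] at this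
    exact zero_ne_one this
  have hconst : ∀ y ∈ Shat S, Ff β y = Ff β q0 := by
    rintro y ⟨hy0, hyS⟩
    rw [← Ff_smul β y (inv_pos.2 (norm_pos_iff.2 hy0))]
    exact Ff_const β hβC1 hmod S hSconn (hSS.trans hSG) _ _ hyS hq0
  obtain ⟨t0, ht0, C, hC, hCG, hxC, u0, hu0, hcase⟩ :=
    foot_path β hβC1 hsph hreg hclosed hclosed' hsimple x hxG hx
  have ht0' : t0 ∈ Set.Icc (0:ℝ) 1 := Set.Ioo_subset_Icc_self ht0
  obtain ⟨e, he, hor⟩ := horient t0 ht0'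
  have hor' : ∀ u : ℝ, 0 < u → u < e → β t0 + u • cross3 (β t0) (deriv β t0) ∈ Shat S := by
    intro u hu hue
    have h := hor u ⟨hu, hue⟩
    refine ⟨?_, h⟩
    intro h0
    rw [h0, smul_zero] at h
    exact hS0 h
  rcases hcase with hcase | hcase
  · left
    have hm := lt_min hu0 he
    have hsub : C ⊆ Shat S := hC.subset_left_of_subset_union (Shat_open S O hO hSO)
      (Shat_open_of _ isClosed_closure.isOpen_compl)
      (Set.disjoint_left.2 fun y hy hy' => hy'.2 (subset_closure hy.2))
      (hCG.trans (Gd_sub_union S β hbdry))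
      ⟨_, hcase (min u0 e / 2) (by positivity) (by linarith [min_le_left u0 e]),
        hor' (min u0 e / 2) (by positivity) (by linarith [min_le_right u0 e])⟩
    exact ⟨hsub hxC, hconst x (hsub hxC)⟩
  · right
    have hval : Ff β x = Ff β q0 - 4 * Real.pi := by
      have : ∀ ε > (0:ℝ), |Ff β q0 - Ff β x - 4 * Real.pi| ≤ ε := by
        intro ε hε
        obtain ⟨η, hη, hj⟩ := jump β hβC1 hsph hclosed hsimple t0 ht0 (hreg t0 ht0') ε hε
        obtain ⟨u, hu, h1, h2, h3⟩ : ∃ u > (0:ℝ), u < u0 ∧ u < e ∧ u < η := by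
          refine ⟨min u0 (min e η) / 2, by positivity, ?_, ?_, ?_⟩
          · have := min_le_left u0 (min e η); linarith
          · have := (min_le_right u0 (min e η)).trans (min_le_left _ _); linarith
          · have := (min_le_right u0 (min e η)).trans (min_le_right _ _); linarith
        have hp := hor' u hu h2
        have hm := hcase u hu h1
        have := hj u hu h3 (hSG hp) (hCG hm)
        rwa [hconst _ hp, Ff_const β hβC1 hmod C hC hCG _ x hm hxC] at this
      have h0 : |Ff β q0 - Ff β x - 4 * Real.pi| ≤ 0 := le_of_forall_pos_le_add (by
        intro ε hε; rw [zero_add]; exact this ε hε)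
      have := abs_nonpos_iff.1 h0
      linarith
    refine ⟨fun h => ?_, hval⟩
    have := hconst x h
    linarith [Real.pi_pos]

open scoped Pointwise in
lemma area_cone (S : Set E3) (hSsph : S ⊆ Metric.sphere (0:E3) 1)
    (O : Set E3) (hO : IsOpen O) (hSO : S = O ∩ Metric.sphere (0:E3) 1) :
    ((volume : Measure E3).toSphere ((Subtype.val) ⁻¹' S)).toReal =
      3 * (volume (Shat S ∩ Metric.ball 0 1)).toReal := by
  have hmeas : MeasurableSet ((Subtype.val : Metric.sphere (0:E3) 1 → E3) ⁻¹' S) := by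
    apply measurable_subtype_coe
    rw [hSO]
    exact hO.measurableSet.inter Metric.isClosed_sphere.measurableSet
  rw [Measure.toSphere_apply' _ hmeas, finrank_euclideanSpace_fin, ENNReal.toReal_mul]
  have hset : Ioo (0:ℝ) 1 • ((Subtype.val : Metric.sphere (0:E3) 1 → E3) '' (Subtype.val ⁻¹' S))
      = Shat S ∩ Metric.ball 0 1 := by
    rw [Subtype.image_preimage_coe, Set.inter_eq_right.2 hSsph]
    ext x
    rw [Set.mem_smul]
    constructor
    · rintro ⟨r, hr, y, hy, rfl⟩
      have h1 : ‖y‖ = 1 := mem_sphere_zero_iff_norm.1 (hSsph hy)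
      have h2 : ‖r • y‖ = r := by rw [norm_smul, h1, mul_one, Real.norm_of_nonneg hr.1.le]
      refine ⟨⟨?_, ?_⟩, ?_⟩
      · rw [← norm_ne_zero_iff, h2]; exact hr.1.ne'
      · rw [h2, smul_smul, inv_mul_cancel₀ hr.1.ne', one_smul]; exact hy
      · rw [mem_ball_zero_iff, h2]; exact hr.2
    · rintro ⟨⟨h0, h1⟩, h2⟩
      have hn := norm_pos_iff.2 h0
      refine ⟨‖x‖, ⟨hn, mem_ball_zero_iff.1 h2⟩, _, h1, ?_⟩
      rw [smul_smul, mul_inv_cancel₀ hn.ne', one_smul]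
  rw [hset]
  norm_num

lemma value_c1 (S : Set E3) (O : Set E3) (hO : IsOpen O) (hSO : S = O ∩ Metric.sphere (0:E3) 1)
    (β : ℝ → E3) (hβC1 : ContDiff ℝ 1 β)
    (hsph : ∀ t ∈ Set.Icc (0:ℝ) 1, ‖β t‖ = 1) (hreg : deriv β 0 ≠ 0) (c : ℝ)
    (hval : ∀ x ∈ Gd β, ⟪x, deriv β 0⟫ ≠ 0 →
      (x ∈ Shat S ∧ Ff β x = c) ∨ (x ∉ Shat S ∧ Ff β x = c - 4 * Real.pi)) :
    c = 4 * Real.pi - 3 * (volume (Shat S ∩ Metric.ball 0 1)).toReal := by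
  have hSm : MeasurableSet (Shat S) := (Shat_open S O hO hSO).measurableSet
  have h0 := Ff_int_zero β hβC1 hsph
  have hae : ∀ᵐ x ∂(volume.restrict (Metric.ball (0:E3) 1)),
      Ff β x = (Shat S).indicator (fun _ => 4 * Real.pi) x + (c - 4 * Real.pi) := by
    apply ae_restrict_of_ae
    have h1 : ∀ᵐ x : E3, x ∈ Gd β := mem_ae_iff.2 (null_cone β hβC1 hsph)
    have h2 : ∀ᵐ x : E3, ⟪x, deriv β 0⟫ ≠ 0 := by
      rw [ae_iff]
      simpa using null_plane (deriv β 0) hreg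
    filter_upwards [h1, h2] with x hx1 hx2
    rcases hval x hx1 hx2 with ⟨h, h'⟩ | ⟨h, h'⟩
    · rw [Set.indicator_of_mem h, h']; ring
    · rw [Set.indicator_of_notMem h, h']; ring
  have hfin : volume (Metric.ball (0:E3) 1) ≠ ∞ := measure_ball_lt_top.ne
  rw [integral_congr_ae hae, integral_add, integral_indicator hSm, integral_const, integral_const,
    Measure.restrict_restrict hSm, measureReal_restrict_apply_univ, measureReal_restrict_apply_univ] at h0
  · have hb : volume.real (Metric.ball (0:E3) 1) = Real.pi * 4 / 3 := by
      rw [measureReal_def, EuclideanSpace.volume_ball_fin_three]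
      simp only [ENNReal.ofReal_one, one_pow, one_mul]
      exact ENNReal.toReal_ofReal (by positivity)
    rw [hb, measureReal_def, smul_eq_mul, smul_eq_mul] at h0
    have hpi := Real.pi_pos
    set m := (volume (Shat S ∩ Metric.ball (0:E3) 1)).toReal
    have h3 : (4 * Real.pi / 3) * (c - (4 * Real.pi - 3 * m)) = 0 := by linarith
    rcases mul_eq_zero.1 h3 with h4 | h4
    · exfalso; linarith
    · linarith
  · exact (integrableOn_const hfin).indicator hSm
  · exact integrableOn_const hfin

/-- Holonomy of the sphere: if `β` is a simple, positively oriented `C¹`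
parametrization of the boundary of a simply connected, smoothly bounded domain `S ⊆ S²` of
spherical area `θ`, then the parallel transport around `β` is the rotation by `θ` in the
tangent plane at `β(0)`: `Π_β v = cos θ • v + sin θ • (β(0) × v)`. -/
theorem statement12
    (S : Set E3) (hSsph : S ⊆ Metric.sphere (0:E3) 1)
    (hSopen : ∃ O : Set E3, IsOpen O ∧ S = O ∩ Metric.sphere (0:E3) 1)
    (hSconn : IsConnected S)
    (hSsimp : SimplyConnectedSpace S)
    (θ : ℝ)
    (hθ : θ = ((volume : Measure E3).toSphere ((Subtype.val) ⁻¹' S)).toReal)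
    (β : ℝ → E3) (hβC1 : ContDiff ℝ 1 β)
    (hsph : ∀ t ∈ Set.Icc (0:ℝ) 1, ‖β t‖ = 1)
    (hreg : ∀ t ∈ Set.Icc (0:ℝ) 1, deriv β t ≠ 0)
    (hclosed : β 0 = β 1) (hclosed' : deriv β 0 = deriv β 1)
    (hsimple : Set.InjOn β (Set.Ico 0 1))
    (hbdry : β '' Set.Icc 0 1 = closure S \ S)
    (horient : ∀ t ∈ Set.Icc (0:ℝ) 1, ∃ ε > (0:ℝ), ∀ s ∈ Set.Ioo (0:ℝ) ε,
      (‖β t + s • cross3 (β t) (deriv β t)‖⁻¹ : ℝ) •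
        (β t + s • cross3 (β t) (deriv β t)) ∈ S) :
    ∀ (v : E3) (V : ℝ → E3), ⟪v, β 0⟫ = 0 → IsParTrans β (deriv β) 0 1 v V →
      V 1 = Real.cos θ • v + Real.sin θ • cross3 (β 0) v := by
  intro v V hv hV
  obtain ⟨O, hO, hSO⟩ := hSopen
  obtain ⟨q0, hq0⟩ := hSconn.nonempty
  have hq1 : ‖q0‖ = 1 := mem_sphere_zero_iff_norm.1 (hSsph hq0)
  have hq0' : q0 ∈ Shat S := by
    refine ⟨norm_ne_zero_iff.1 (by rw [hq1]; exact one_ne_zero), ?_⟩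
    rw [hq1, inv_one, one_smul]; exact hq0
  have hqG : q0 ∈ Gd β := Shat_sub_Gd S β hsph hbdry hq0'
  have hhol := Ff_hol β hβC1 hsph hclosed v V hv hV q0 hqG
  by_cases hv0 : v = 0
  · have hc0 : cross3 (β 0) (0:E3) = 0 := by
      have h := cross3_smul_right (β 0) (0:E3) (0:ℝ)
      rwa [zero_smul, zero_smul] at h
    rw [hhol, hv0, hc0]
    simp
  have hmod : ∀ x ∈ Gd β, ∀ y ∈ Gd β, ∃ n : ℤ, Ff β x = Ff β y + n * (2 * Real.pi) :=
    fun x hx y hy => Ff_mod β hβC1 hsph hclosed v V hv0 hv hV x y hx hy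
  have hc := value_c1 S O hO hSO β hβC1 hsph (hreg 0 ⟨le_rfl, zero_le_one⟩) (Ff β q0)
    (fun x hx hx' => Ff_values S hSsph O hO hSO hSconn.isPreconnected β hβC1 hsph hreg hclosed
      hclosed' hsimple hbdry horient hmod q0 hq0 x hx hx')
  rw [← area_cone S hSsph O hO hSO, ← hθ] at hc
  have e1 : Real.cos (Ff β q0) = Real.cos θ := by
    rw [hc, show 4 * Real.pi - θ = -θ + 2 * Real.pi + 2 * Real.pi by ring,
      Real.cos_add_two_pi, Real.cos_add_two_pi, Real.cos_neg]
  have e2 : Real.sin (Ff β q0) = - Real.sin θ := by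
    rw [hc, show 4 * Real.pi - θ = -θ + 2 * Real.pi + 2 * Real.pi by ring,
      Real.sin_add_two_pi, Real.sin_add_two_pi, Real.sin_neg]
  rw [hhol, e1, e2, neg_smul, sub_neg_eq_add]
end
end

section
/- For all r̄ ∈ SO(3) and all γ̄ ∈ ℝ³ with |γ̄| < 1 there exists a framed curve (γ, r) with γ ∈ C^∞([0,1], ℝ³), r ∈ C^∞([0,1], SO(3)), γ' = r₁ and r₁' · r₂ ≡ 0, such that: (i) r(0) = Id, r(1) = r̄, γ(0) = 0 and γ(1) = γ̄; (ii) there exists K_g ∈ C₀^∞(I) with |K_g| ≤ π/4 on I such that the field r̃₁(t) := cos(K_g(t)) r₁(t) + sin(K_g(t)) (r₃(t) × r₁(t)) satisfies r₃' × r̃₁ = 0 on I, i.e. the frame r̃ with rows r̃₁, r̃₂ = r₃ × r̃₁, r̃₃ = r₃ is an adapted frame for the spherical curve r₃ : I → S²; in particular, r₃ has bounded geodesic curvature. -/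
open MeasureTheory Set Filter Matrix
open scoped RealInnerProductSpace Topology ENNReal NNReal

noncomputable section

/-- Infinitesimal generator. -/
def genA (K : ℝ) : Matrix (Fin 3) (Fin 3) ℝ :=
  !![0, 0, Real.cos K; 0, 0, Real.sin K; -Real.cos K, -Real.sin K, 0]

/-- Admissible path of frames of duration `T`, starting at the identity. -/
structure Adm (T : ℝ) (r : ℝ → Matrix (Fin 3) (Fin 3) ℝ) : Prop where
  T0 : 0 ≤ T
  sm : ∀ i j, ContDiff ℝ (⊤ : ℕ∞) (fun t => r t i j)
  so : ∀ t, r t ∈ SO3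
  left : ∀ t ≤ 0, r t = 1
  right : ∀ t, T ≤ t → r t = r T
  ex : ∃ δ > 0, ∃ K l : ℝ → ℝ, ContDiff ℝ (⊤ : ℕ∞) K ∧ (∀ t < δ, K t = 0) ∧
    (∀ t, T - δ < t → K t = 0) ∧ (∀ t, |K t| ≤ Real.pi / 4) ∧ (∀ t ≤ 0, l t = 0) ∧
    (∀ t, T ≤ t → l t = 0) ∧
    ∀ t i j, HasDerivAt (fun t => r t i j) ((l t • (genA (K t) * r t)) i j) t

theorem SO3_one : (1 : Matrix (Fin 3) (Fin 3) ℝ) ∈ SO3 := by simp [SO3]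

theorem SO3_mul {M N : Matrix (Fin 3) (Fin 3) ℝ} (hM : M ∈ SO3) (hN : N ∈ SO3) :
    M * N ∈ SO3 := by
  refine ⟨?_, by rw [det_mul, hM.2, hN.2, one_mul]⟩
  rw [transpose_mul, Matrix.mul_assoc, ← Matrix.mul_assoc N, hN.1, Matrix.one_mul, hM.1]

theorem SO3_tr {M : Matrix (Fin 3) (Fin 3) ℝ} (hM : M ∈ SO3) : Mᵀ * M = 1 :=
  mul_eq_one_comm.mp hM.1

theorem SO3_transpose {M : Matrix (Fin 3) (Fin 3) ℝ} (hM : M ∈ SO3) : Mᵀ ∈ SO3 :=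
  ⟨by rw [transpose_transpose]; exact SO3_tr hM, by rw [det_transpose]; exact hM.2⟩

theorem Adm.wait {T : ℝ} (hT : 0 ≤ T) : Adm T (fun _ => 1) where
  T0 := hT
  sm := fun i j => contDiff_const
  so := fun _ => SO3_one
  left := fun _ _ => rfl
  right := fun _ _ => rfl
  ex := ⟨1, one_pos, fun _ => 0, fun _ => 0, contDiff_const, by simp, by simp,
    by intro t; simp; positivity, by simp, by simp, by
      intro t i j
      simpa using hasDerivAt_const t ((1 : Matrix (Fin 3) (Fin 3) ℝ) i j)⟩

theorem Adm.scale {T c : ℝ} {r : ℝ → Matrix (Fin 3) (Fin 3) ℝ} (h : Adm T r) (hc : 0 < c) :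
    Adm (c * T) (fun t => r (t / c)) where
  T0 := mul_nonneg hc.le h.T0
  sm := fun i j => (h.sm i j).comp (contDiff_id.div_const c)
  so := fun _ => h.so _
  left := fun t ht => h.left _ (div_nonpos_of_nonpos_of_nonneg ht hc.le)
  right := fun t ht => by
    have : T ≤ t / c := by rw [le_div_iff₀ hc]; linarith
    beta_reduce
    rw [h.right _ this, mul_div_cancel_left₀ _ hc.ne']
  ex := by
    obtain ⟨δ, hδ, K, l, hK, hK0, hK1, hKb, hl0, hl1, hd⟩ := h.ex
    refine ⟨c * δ, by positivity, fun t => K (t / c), fun t => l (t / c) / c,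
      hK.comp (contDiff_id.div_const c), ?_, ?_, fun t => hKb _, ?_, ?_, ?_⟩
    · intro t ht
      exact hK0 _ (by rw [div_lt_iff₀ hc]; linarith)
    · intro t ht
      exact hK1 _ (by rw [lt_div_iff₀ hc]; linarith)
    · intro t ht
      beta_reduce
      rw [hl0 _ (div_nonpos_of_nonpos_of_nonneg ht hc.le), zero_div]
    · intro t ht
      beta_reduce
      rw [hl1 _ (by rw [le_div_iff₀ hc]; linarith), zero_div]
    · intro t i j
      have h1 := (hd (t / c) i j).comp t ((hasDerivAt_id t).div_const c)
      refine HasDerivAt.congr_deriv h1 ?_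
      simp only [Matrix.smul_apply, smul_eq_mul]
      ring

theorem Adm.concat {T1 T2 : ℝ} {r1 r2 : ℝ → Matrix (Fin 3) (Fin 3) ℝ} (h1 : Adm T1 r1)
    (h2 : Adm T2 r2) : Adm (T1 + T2) (fun t => r2 (t - T1) * r1 t) where
  T0 := add_nonneg h1.T0 h2.T0
  sm := fun i j => by
    simp only [mul_apply]
    exact ContDiff.sum fun k _ =>
      ((h2.sm i k).comp (contDiff_id.sub contDiff_const)).mul (h1.sm k j)
  so := fun t => SO3_mul (h2.so _) (h1.so _)
  left := fun t ht => by
    have := h1.T0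
    beta_reduce
    rw [h1.left t ht, h2.left _ (by linarith), Matrix.one_mul]
  right := fun t ht => by
    have := h1.T0
    have := h2.T0
    beta_reduce
    rw [h1.right t (by linarith), h2.right (t - T1) (by linarith), h1.right (T1 + T2) (by linarith),
      add_sub_cancel_left]
  ex := by
    have hT1 := h1.T0
    have hT2 := h2.T0
    obtain ⟨δ, hδ, K, l, hK, hK0, hK1, hKb, hl0, hl1, hd⟩ := h1.ex
    obtain ⟨δ', hδ', K', l', hK', hK0', hK1', hKb', hl0', hl1', hd'⟩ := h2.ex
    refine ⟨min δ δ', lt_min hδ hδ', fun t => K t + K' (t - T1), fun t => l t + l' (t - T1),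
      hK.add (hK'.comp (contDiff_id.sub contDiff_const)), ?_, ?_, ?_, ?_, ?_, ?_⟩
    · intro t ht
      have := lt_min_iff.mp ht
      beta_reduce
      rw [hK0 t this.1, hK0' _ (by linarith), add_zero]
    · intro t ht
      have a1 := min_le_left δ δ'
      have a2 := min_le_right δ δ'
      beta_reduce
      rw [hK1' _ (by linarith)]
      by_cases h : T1 - δ < t
      · rw [hK1 _ h, add_zero]
      · exfalso; linarith
    · intro t
      rcases le_total t T1 with h | h
      · beta_reduce
        rw [hK0' _ (by linarith), add_zero]; exact hKb t
      · beta_reduce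
        rw [hK1 _ (by linarith), zero_add]; exact hKb' _
    · intro t ht
      beta_reduce
      rw [hl0 t ht, hl0' _ (by linarith), add_zero]
    · intro t ht
      beta_reduce
      rw [hl1 t (by linarith), hl1' _ (by linarith), add_zero]
    · intro t i j
      have key : HasDerivAt (fun t => (r2 (t - T1) * r1 t) i j)
          (((l' (t - T1) • (genA (K' (t - T1)) * r2 (t - T1))) * r1 t +
            r2 (t - T1) * (l t • (genA (K t) * r1 t))) i j) t := by
        rw [Matrix.add_apply, Matrix.mul_apply, Matrix.mul_apply, ← Finset.sum_add_distrib]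
        have e0 : (fun t => (r2 (t - T1) * r1 t) i j) = fun t => ∑ k, r2 (t - T1) i k * r1 t k j := by
          funext t; rw [Matrix.mul_apply]
        rw [e0]
        refine HasDerivAt.fun_sum fun k _ => ?_
        have e2 := (hd' (t - T1) i k).comp t ((hasDerivAt_id t).sub_const T1)
        rw [mul_one] at e2
        have e3 := e2.mul (hd t k j)
        exact e3
      convert key using 1
      rcases le_total t T1 with h | h
      · rw [hK0' (t - T1) (by linarith), hl0' (t - T1) (by linarith), h2.left (t - T1) (by linarith)]
        simp [hK0' (t - T1) (by linarith), hl0' (t - T1) (by linarith)]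
      · rw [hK1 t (by linarith), hl1 t h]
        simp [Matrix.mul_assoc, hK1 t (by linarith), hl1 t h]

/-- Rotation by angle `θ` generated by `genA K`. -/
def rotE (K θ : ℝ) : Matrix (Fin 3) (Fin 3) ℝ :=
  !![1 - (1 - Real.cos θ) * Real.cos K ^ 2, -(1 - Real.cos θ) * (Real.cos K * Real.sin K),
      Real.sin θ * Real.cos K;
    -(1 - Real.cos θ) * (Real.cos K * Real.sin K), 1 - (1 - Real.cos θ) * Real.sin K ^ 2,
      Real.sin θ * Real.sin K;
    -(Real.sin θ * Real.cos K), -(Real.sin θ * Real.sin K), Real.cos θ]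

theorem rotE_zero (K : ℝ) : rotE K 0 = 1 := by
  ext i j
  fin_cases i <;> fin_cases j <;> simp [rotE]

theorem rotE_SO3 (K θ : ℝ) : rotE K θ ∈ SO3 := by
  unfold rotE
  have h1 := Real.sin_sq_add_cos_sq K
  have h2 := Real.sin_sq_add_cos_sq θ
  have h1' : Real.sin K ^ 2 = 1 - Real.cos K ^ 2 := by linarith
  have h2' : Real.sin θ ^ 2 = 1 - Real.cos θ ^ 2 := by linarith
  clear h1 h2
  generalize Real.sin K = s at *
  generalize Real.sin θ = u at *
  generalize Real.cos θ = v at *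
  generalize Real.cos K = w at *
  constructor
  · ext i j
    fin_cases i <;> fin_cases j <;>
      simp [rotE, Matrix.mul_apply, Fin.sum_univ_three] <;> grind
  · simp [rotE, Matrix.det_fin_three]; grind

theorem hasDerivAt_rotE (K θ : ℝ) (i j : Fin 3) :
    HasDerivAt (fun θ => rotE K θ i j) ((genA K * rotE K θ) i j) θ := by
  have h1 := Real.sin_sq_add_cos_sq K
  have hc := Real.hasDerivAt_cos θ
  have hs := Real.hasDerivAt_sin θ
  have hk := hasDerivAt_const θ (1:ℝ)
  fin_cases i <;> fin_cases j <;>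
    simp only [rotE, genA, Matrix.mul_apply, Fin.sum_univ_three] <;> simp
  · refine HasDerivAt.congr_deriv (((hc.const_sub 1).mul_const (Real.cos K ^ 2)).const_sub 1) ?_; ring
  · refine HasDerivAt.congr_deriv (((hc.sub_const 1).mul_const (Real.cos K * Real.sin K))) ?_; ring
  · refine HasDerivAt.congr_deriv (hs.mul_const (Real.cos K)) ?_; ring
  · refine HasDerivAt.congr_deriv (((hc.sub_const 1).mul_const (Real.cos K * Real.sin K))) ?_; ring
  · refine HasDerivAt.congr_deriv (((hc.const_sub 1).mul_const (Real.sin K ^ 2)).const_sub 1) ?_; ring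
  · refine HasDerivAt.congr_deriv (hs.mul_const (Real.sin K)) ?_; ring
  · refine HasDerivAt.congr_deriv ((hs.mul_const (Real.cos K)).fun_neg) ?_; linear_combination -(1 - Real.cos θ) * Real.cos K * h1
  · refine HasDerivAt.congr_deriv ((hs.mul_const (Real.sin K)).fun_neg) ?_; linear_combination -(1 - Real.cos θ) * Real.sin K * h1
  · refine HasDerivAt.congr_deriv (hc) ?_; linear_combination Real.sin θ * h1

theorem contDiff_rotE (K : ℝ) (i j : Fin 3) :
    ContDiff ℝ (⊤ : ℕ∞) (fun θ => rotE K θ i j) := by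
  fin_cases i <;> fin_cases j <;> simp [rotE] <;> fun_prop

theorem Adm.rot (κ a : ℝ) (hκ : |κ| ≤ Real.pi / 4) :
    Adm 1 (fun t => rotE κ (a * Real.smoothTransition (3 * t - 1))) := by
  have hφ : ContDiff ℝ (⊤ : ℕ∞) (fun t : ℝ => Real.smoothTransition (3 * t - 1)) :=
    Real.smoothTransition.contDiff.comp (by fun_prop)
  have hφ0 : ∀ t : ℝ, t ≤ 1/3 → Real.smoothTransition (3 * t - 1) = 0 := fun t ht =>
    Real.smoothTransition.zero_of_nonpos (by linarith)
  have hφ1 : ∀ t : ℝ, 2/3 ≤ t → Real.smoothTransition (3 * t - 1) = 1 := fun t ht =>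
    Real.smoothTransition.one_of_one_le (by linarith)
  have hd0 : ∀ t : ℝ, t < 1/3 → deriv (fun t : ℝ => Real.smoothTransition (3 * t - 1)) t = 0 := by
    intro t ht
    have : (fun t : ℝ => Real.smoothTransition (3 * t - 1)) =ᶠ[𝓝 t] fun _ => 0 := by
      filter_upwards [Iio_mem_nhds ht] with s hs using hφ0 s (le_of_lt hs)
    rw [this.deriv_eq]; simp
  have hd1 : ∀ t : ℝ, 2/3 < t → deriv (fun t : ℝ => Real.smoothTransition (3 * t - 1)) t = 0 := by
    intro t ht
    have : (fun t : ℝ => Real.smoothTransition (3 * t - 1)) =ᶠ[𝓝 t] fun _ => 1 := by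
      filter_upwards [Ioi_mem_nhds ht] with s hs using hφ1 s (le_of_lt hs)
    rw [this.deriv_eq]; simp
  set φ := (fun t : ℝ => Real.smoothTransition (3 * t - 1)) with hφdef
  refine ⟨zero_le_one, ?_, fun t => rotE_SO3 _ _, ?_, ?_, ?_⟩
  · intro i j
    exact (contDiff_rotE κ i j).comp (contDiff_const.mul hφ)
  · intro t ht
    beta_reduce
    rw [hφ0 t (by linarith), mul_zero, rotE_zero]
  · intro t ht
    beta_reduce
    rw [hφ1 t (by linarith), hφ1 1 (by norm_num)]
  · refine ⟨1/6, by norm_num, fun t => κ * (Real.smoothTransition (6 * t - 1) *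
      Real.smoothTransition (5 - 6 * t)), fun t => a * deriv φ t, ?_, ?_, ?_, ?_, ?_, ?_, ?_⟩
    · exact contDiff_const.mul ((Real.smoothTransition.contDiff.comp (by fun_prop)).mul
        (Real.smoothTransition.contDiff.comp (by fun_prop)))
    · intro t ht
      beta_reduce
      rw [Real.smoothTransition.zero_of_nonpos (x := 6 * t - 1) (by linarith)]; simp
    · intro t ht
      beta_reduce
      rw [Real.smoothTransition.zero_of_nonpos (x := 5 - 6 * t) (by linarith)]; simp
    · intro t
      refine le_trans ?_ hκ
      rw [abs_mul]
      refine mul_le_of_le_one_right (abs_nonneg _) ?_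
      rw [abs_of_nonneg (mul_nonneg (Real.smoothTransition.nonneg _) (Real.smoothTransition.nonneg _))]
      exact mul_le_one₀ (Real.smoothTransition.le_one _) (Real.smoothTransition.nonneg _)
        (Real.smoothTransition.le_one _)
    · intro t ht
      beta_reduce
      rw [hd0 t (by linarith), mul_zero]
    · intro t ht
      beta_reduce
      rw [hd1 t (by linarith), mul_zero]
    · intro t i j
      have hφt : HasDerivAt φ (deriv φ t) t :=
        (hφ.differentiable (by simp) t).hasDerivAt
      have key := (hasDerivAt_rotE κ (a * φ t) i j).comp t (hφt.const_mul a)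
      refine HasDerivAt.congr_deriv key ?_
      simp only [Matrix.smul_apply, smul_eq_mul]
      by_cases h0 : t < 1/3
      · rw [hd0 t h0]; simp
      by_cases h1 : 2/3 < t
      · rw [hd1 t h1]; simp
      push Not at h0 h1
      rw [Real.smoothTransition.one_of_one_le (x := 6 * t - 1) (by linarith),
        Real.smoothTransition.one_of_one_le (x := 5 - 6 * t) (by linarith), mul_one, mul_one, mul_comm]

/-- Reachability in time `T` of frame `M` with displacement `D`. -/
def Reach (T : ℝ) (M : Matrix (Fin 3) (Fin 3) ℝ) (D : Fin 3 → ℝ) : Prop :=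
  ∃ r, Adm T r ∧ r T = M ∧ ∀ j, ∫ t in (0:ℝ)..T, r t 0 j = D j

theorem Reach.wait {T : ℝ} (hT : 0 ≤ T) :
    Reach T 1 (fun j => T * (1 : Matrix (Fin 3) (Fin 3) ℝ) 0 j) :=
  ⟨_, Adm.wait hT, rfl, fun j => by simp⟩

theorem Reach.scale {T c : ℝ} {M : Matrix (Fin 3) (Fin 3) ℝ} {D : Fin 3 → ℝ}
    (h : Reach T M D) (hc : 0 < c) : Reach (c * T) M (fun j => c * D j) := by
  obtain ⟨r, hr, hM, hD⟩ := h
  refine ⟨_, hr.scale hc, ?_, fun j => ?_⟩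
  · beta_reduce
    rw [mul_div_cancel_left₀ _ hc.ne', hM]
  · rw [intervalIntegral.integral_comp_div (fun t => r t 0 j) hc.ne', zero_div,
      mul_div_cancel_left₀ _ hc.ne', hD, smul_eq_mul]

theorem Reach.concat {T1 T2 : ℝ} {M1 M2 : Matrix (Fin 3) (Fin 3) ℝ} {D1 D2 : Fin 3 → ℝ}
    (h1 : Reach T1 M1 D1) (h2 : Reach T2 M2 D2) :
    Reach (T1 + T2) (M2 * M1) (fun j => D1 j + ∑ k, D2 k * M1 k j) := by
  obtain ⟨r1, hr1, hM1, hD1⟩ := h1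
  obtain ⟨r2, hr2, hM2, hD2⟩ := h2
  have hc := hr1.concat hr2
  have hT1 := hr1.T0
  have hT2 := hr2.T0
  refine ⟨_, hc, ?_, fun j => ?_⟩
  · beta_reduce
    rw [add_sub_cancel_left, hM2, hr1.right _ (by linarith), hM1]
  · have hi : ∀ a b, IntervalIntegrable (fun t => (r2 (t - T1) * r1 t) 0 j) volume a b :=
      fun a b => (hc.sm 0 j).continuous.intervalIntegrable a b
    rw [← intervalIntegral.integral_add_adjacent_intervals (hi 0 T1) (hi T1 (T1 + T2))]
    congr 1
    · rw [← hD1]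
      refine intervalIntegral.integral_congr fun t ht => ?_
      rw [uIcc_of_le hT1] at ht
      beta_reduce
      rw [hr2.left _ (by linarith [ht.2]), Matrix.one_mul]
    · have e1 : ∫ t in T1..(T1 + T2), (r2 (t - T1) * r1 t) 0 j =
          ∫ t in T1..(T1 + T2), (fun s => ∑ k, r2 s 0 k * M1 k j) (t - T1) := by
        refine intervalIntegral.integral_congr fun t ht => ?_
        rw [uIcc_of_le (by linarith)] at ht
        beta_reduce
        rw [hr1.right _ ht.1, hM1, Matrix.mul_apply]
      rw [e1, intervalIntegral.integral_comp_sub_right (fun s => ∑ k, r2 s 0 k * M1 k j) T1, sub_self, add_sub_cancel_left,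
        intervalIntegral.integral_finset_sum]
      · refine Finset.sum_congr rfl fun k _ => ?_
        rw [intervalIntegral.integral_mul_const, hD2]
      · intro k _
        exact ((hr2.sm 0 k).continuous.mul continuous_const).intervalIntegrable _ _

theorem Reach.rot (κ a : ℝ) (hκ : |κ| ≤ Real.pi / 4) : ∃ D, Reach 1 (rotE κ a) D :=
  ⟨_, _, Adm.rot κ a hκ, by
    beta_reduce
    rw [Real.smoothTransition.one_of_one_le (by norm_num), mul_one], fun _ => rfl⟩

theorem exists_angle {x y : ℝ} (h : x ^ 2 + y ^ 2 = 1) :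
    ∃ θ, Real.cos θ = x ∧ Real.sin θ = y := by
  have hn : ‖(⟨x, y⟩ : ℂ)‖ = 1 := by
    rw [Complex.norm_eq_sqrt_sq_add_sq]; simp [h]
  have hne : (⟨x, y⟩ : ℂ) ≠ 0 := by
    intro h0; rw [h0] at hn; simp at hn
  refine ⟨Complex.arg ⟨x, y⟩, ?_, ?_⟩
  · rw [Complex.cos_arg hne, hn, div_one]
  · rw [Complex.sin_arg, hn, div_one]

theorem exists_angle_zero (x y : ℝ) : ∃ θ, Real.cos θ * x - Real.sin θ * y = 0 := by
  by_cases h : x ^ 2 + y ^ 2 = 0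
  · have hx : x = 0 := by nlinarith [sq_nonneg x, sq_nonneg y]
    have hy : y = 0 := by nlinarith [sq_nonneg x, sq_nonneg y]
    exact ⟨0, by simp [hx]⟩
  · have hp : 0 < x ^ 2 + y ^ 2 := lt_of_le_of_ne (by positivity) (Ne.symm h)
    have hs := Real.sq_sqrt hp.le
    have hs0 : 0 < Real.sqrt (x ^ 2 + y ^ 2) := Real.sqrt_pos.mpr hp
    obtain ⟨θ, h1, h2⟩ := exists_angle (x := y / Real.sqrt (x ^ 2 + y ^ 2))
      (y := x / Real.sqrt (x ^ 2 + y ^ 2)) (by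
        rw [div_pow, div_pow, hs]; field_simp; ring)
    exact ⟨θ, by rw [h1, h2]; ring⟩

/-- Rotation about the first axis. -/
def rotX (θ : ℝ) : Matrix (Fin 3) (Fin 3) ℝ :=
  !![1, 0, 0; 0, Real.cos θ, Real.sin θ; 0, -Real.sin θ, Real.cos θ]

/-- Rotation about the second axis. -/
def rotY (θ : ℝ) : Matrix (Fin 3) (Fin 3) ℝ :=
  !![Real.cos θ, 0, Real.sin θ; 0, 1, 0; -Real.sin θ, 0, Real.cos θ]

theorem rotX_mul_neg (θ : ℝ) : rotX θ * rotX (-θ) = 1 := by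
  have h2 := Real.sin_sq_add_cos_sq θ
  ext i j
  fin_cases i <;> fin_cases j <;>
    simp [rotX, Matrix.mul_apply, Fin.sum_univ_three] <;> grind

theorem rotY_mul_neg (θ : ℝ) : rotY θ * rotY (-θ) = 1 := by
  have h2 := Real.sin_sq_add_cos_sq θ
  ext i j
  fin_cases i <;> fin_cases j <;>
    simp [rotY, Matrix.mul_apply, Fin.sum_univ_three] <;> grind

theorem rotX_SO3 (θ : ℝ) : rotX θ ∈ SO3 := by
  have h2 := Real.sin_sq_add_cos_sq θ
  constructor
  · ext i j
    fin_cases i <;> fin_cases j <;>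
      simp [rotX, Matrix.mul_apply, Fin.sum_univ_three] <;> grind
  · simp [rotX, Matrix.det_fin_three]; grind

theorem rotY_SO3 (θ : ℝ) : rotY θ ∈ SO3 := by
  have h2 := Real.sin_sq_add_cos_sq θ
  constructor
  · ext i j
    fin_cases i <;> fin_cases j <;>
      simp [rotY, Matrix.mul_apply, Fin.sum_univ_three] <;> grind
  · simp [rotY, Matrix.det_fin_three]; grind

theorem SO3_col {M : Matrix (Fin 3) (Fin 3) ℝ} (hM : M ∈ SO3) :
    M 0 0 ^ 2 + M 1 0 ^ 2 + M 2 0 ^ 2 = 1 := by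
  have := congrFun (congrFun (SO3_tr hM) 0) 0
  simp [Matrix.mul_apply, Fin.sum_univ_three] at this
  linarith

theorem eq_rotX {M : Matrix (Fin 3) (Fin 3) ℝ} (hM : M ∈ SO3) (h0 : M 0 0 = 1)
    (h1 : M 1 0 = 0) (h2 : M 2 0 = 0) : ∃ c, M = rotX c := by
  have e00 := congrFun (congrFun hM.1 0) 0
  have e11 := congrFun (congrFun hM.1 1) 1
  have e12 := congrFun (congrFun hM.1 1) 2
  have e22 := congrFun (congrFun hM.1 2) 2
  have hd := hM.2
  simp [Matrix.mul_apply, Fin.sum_univ_three, Matrix.det_fin_three, h0, h1, h2] at e00 e11 e12 e22 hd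
  have h01 : M 0 1 = 0 := by nlinarith [sq_nonneg (M 0 1), sq_nonneg (M 0 2)]
  have h02 : M 0 2 = 0 := by nlinarith [sq_nonneg (M 0 1), sq_nonneg (M 0 2)]
  obtain ⟨c, hc, hs⟩ := exists_angle (x := M 1 1) (y := M 1 2) (by linarith)
  have h22 : M 2 2 = M 1 1 := by grind
  have h21 : M 2 1 = - M 1 2 := by grind
  refine ⟨c, ?_⟩
  ext i j
  fin_cases i <;> fin_cases j <;> simp [rotX, h0, h1, h2, h01, h02, hc, hs, h21, h22]

theorem euler {M : Matrix (Fin 3) (Fin 3) ℝ} (hM : M ∈ SO3) :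
    ∃ a b c, M = rotX a * (rotY b * rotX c) := by
  obtain ⟨a, ha⟩ := exists_angle_zero (M 1 0) (M 2 0)
  have hN : rotX (-a) * M ∈ SO3 := SO3_mul (rotX_SO3 _) hM
  have hMN : M = rotX a * (rotX (-a) * M) := by
    rw [← Matrix.mul_assoc, rotX_mul_neg, Matrix.one_mul]
  have hN10 : (rotX (-a) * M) 1 0 = 0 := by
    simp [rotX, Matrix.mul_apply, Fin.sum_univ_three]; linarith
  generalize rotX (-a) * M = N at *
  have hc := SO3_col hN
  obtain ⟨b, hb, hb'⟩ := exists_angle (x := N 0 0) (y := - N 2 0) (by rw [hN10] at hc; linarith)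
  have hP : rotY (-b) * N ∈ SO3 := SO3_mul (rotY_SO3 _) hN
  have hNP : N = rotY b * (rotY (-b) * N) := by
    rw [← Matrix.mul_assoc, rotY_mul_neg, Matrix.one_mul]
  have h0 : (rotY (-b) * N) 0 0 = 1 := by
    simp [rotY, Matrix.mul_apply, Fin.sum_univ_three, hb, hb']; rw [hN10] at hc; linarith
  have h1 : (rotY (-b) * N) 1 0 = 0 := by
    simp [rotY, Matrix.mul_apply, Fin.sum_univ_three, hN10]
  have h2 : (rotY (-b) * N) 2 0 = 0 := by
    simp [rotY, Matrix.mul_apply, Fin.sum_univ_three, hb, hb']; ring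
  obtain ⟨c, hc⟩ := eq_rotX hP h0 h1 h2
  exact ⟨a, b, c, by rw [hMN, hNP, hc]⟩

/-- Change of basis. -/
def matU : Matrix (Fin 3) (Fin 3) ℝ :=
  !![√2 / 2, √2 / 2, 0; -(√2 / 2), √2 / 2, 0; 0, 0, 1]

theorem matU_SO3 : matU ∈ SO3 := by
  have h : √2 * √2 = (2:ℝ) := Real.mul_self_sqrt (by norm_num)
  constructor
  · ext i j
    fin_cases i <;> fin_cases j <;>
      simp [matU, Matrix.mul_apply, Fin.sum_univ_three] <;> linarith
  · simp [matU, Matrix.det_fin_three]; linarith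

theorem rotE_pos (θ : ℝ) : rotE (Real.pi / 4) θ = matU * rotX θ * matUᵀ := by
  have h : √2 * √2 = (2:ℝ) := Real.mul_self_sqrt (by norm_num)
  ext i j
  fin_cases i <;> fin_cases j <;>
    simp [rotE, rotX, matU, Matrix.mul_apply, Fin.sum_univ_three] <;> grind

theorem rotE_neg (θ : ℝ) : rotE (-(Real.pi / 4)) θ = matU * rotY θ * matUᵀ := by
  have h : √2 * √2 = (2:ℝ) := Real.mul_self_sqrt (by norm_num)
  ext i j
  fin_cases i <;> fin_cases j <;>
    simp [rotE, rotY, matU, Matrix.mul_apply, Fin.sum_univ_three] <;> grind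

theorem reach_all {M : Matrix (Fin 3) (Fin 3) ℝ} (hM : M ∈ SO3) : ∃ D, Reach 3 M D := by
  obtain ⟨a, b, c, h⟩ := euler (SO3_mul (SO3_mul (SO3_transpose matU_SO3) hM) matU_SO3)
  have h1 : M = rotE (Real.pi / 4) a * (rotE (-(Real.pi / 4)) b * rotE (Real.pi / 4) c) := by
    have h2 : M = matU * (matUᵀ * M * matU) * matUᵀ := by
      have := matU_SO3.1
      calc M = (matU * matUᵀ) * M * (matU * matUᵀ) := by rw [this]; simp
        _ = _ := by simp only [Matrix.mul_assoc]
    have h3 := SO3_tr matU_SO3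
    rw [h2, h, rotE_pos, rotE_pos, rotE_neg]
    calc matU * (rotX a * (rotY b * rotX c)) * matUᵀ
        = matU * rotX a * 1 * rotY b * 1 * rotX c * matUᵀ := by simp [Matrix.mul_assoc]
      _ = _ := by rw [← h3]; simp only [Matrix.mul_assoc]
  have hp : |Real.pi / 4| ≤ Real.pi / 4 := by rw [abs_of_pos (by positivity)]
  have hp' : |-(Real.pi / 4)| ≤ Real.pi / 4 := by rw [abs_neg]; exact hp
  obtain ⟨D1, r1⟩ := Reach.rot _ c hp
  obtain ⟨D2, r2⟩ := Reach.rot _ b hp'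
  obtain ⟨D3, r3⟩ := Reach.rot _ a hp
  have := (r1.concat r2).concat r3
  rw [← h1] at this
  norm_num at this
  exact ⟨_, this⟩

theorem reach_waits {ι : Type*} (Q : ι → Matrix (Fin 3) (Fin 3) ℝ) (hQ : ∀ i, Q i ∈ SO3)
    (s : Finset ι) : ∀ M ∈ SO3, ∃ T0 > 0, ∃ W : Fin 3 → ℝ, ∀ c : ι → ℝ, (∀ i, 0 ≤ c i) →
      Reach (T0 + ∑ i ∈ s, c i) M (fun j => W j + ∑ i ∈ s, c i * Q i 0 j) := by
  classical
  induction s using Finset.induction_on with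
  | empty =>
    intro M hM
    obtain ⟨D, hD⟩ := reach_all hM
    exact ⟨3, by norm_num, D, fun c _ => by simpa using hD⟩
  | insert a s ha ih =>
    intro M hM
    obtain ⟨T0, hT0, W, h⟩ := ih (Q a) (hQ a)
    obtain ⟨D, hD⟩ := reach_all (SO3_mul hM (SO3_transpose (hQ a)))
    refine ⟨T0 + 3, by linarith, fun j => W j + ∑ k, D k * Q a k j, fun c hc => ?_⟩
    have := ((h c hc).concat (Reach.wait (hc a))).concat hD
    convert this using 1
    · rw [Finset.sum_insert ha]; ring
    · rw [Matrix.one_mul, Matrix.mul_assoc, SO3_tr (hQ a), Matrix.mul_one]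
    · funext j
      rw [Finset.sum_insert ha, Matrix.one_mul]
      have : ∑ k, c a * (1 : Matrix (Fin 3) (Fin 3) ℝ) 0 k * Q a k j = c a * Q a 0 j := by
        simp [Fin.sum_univ_three]
      rw [this]; ring

theorem exists_frame_of (x y z p q w : ℝ) (h1 : x ^ 2 + y ^ 2 + z ^ 2 = 1)
    (h2 : p ^ 2 + q ^ 2 + w ^ 2 = 1) (h3 : x * p + y * q + z * w = 0) :
    ∃ Q ∈ SO3, Q 0 0 = x ∧ Q 0 1 = y ∧ Q 0 2 = z := by
  refine ⟨!![x, y, z; p, q, w; y * w - z * q, z * p - x * w, x * q - y * p], ⟨?_, ?_⟩, ?_⟩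
  · ext i j
    fin_cases i <;> fin_cases j <;>
      simp [Matrix.mul_apply, Fin.sum_univ_three] <;> grind
  · simp [Matrix.det_fin_three]; grind
  · simp

theorem exists_frame (v : E3) : ∃ Q ∈ SO3, ‖v‖ = 1 → ∀ j, Q 0 j = v j := by
  by_cases hv : ‖v‖ = 1
  · have h : v 0 ^ 2 + v 1 ^ 2 + v 2 ^ 2 = 1 := by
      have := EuclideanSpace.norm_sq_eq v
      rw [hv] at this
      simp [Fin.sum_univ_three] at this
      linarith
    have : ∃ Q ∈ SO3, Q 0 0 = v 0 ∧ Q 0 1 = v 1 ∧ Q 0 2 = v 2 := by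
      obtain ⟨θ, hθ⟩ := exists_angle_zero (v 0) (v 1)
      have hcs := Real.sin_sq_add_cos_sq θ
      exact exists_frame_of _ _ _ (Real.cos θ) (-Real.sin θ) 0 h (by linarith) (by linarith)
    obtain ⟨Q, hQ, a, b, c⟩ := this
    refine ⟨Q, hQ, fun _ j => ?_⟩
    fin_cases j <;> assumption
  · exact ⟨1, SO3_one, fun h => absurd h hv⟩

theorem exists_finset (g : E3) (hg : ‖g‖ < 1) :
    ∃ s : Finset E3, (∀ v ∈ s, ‖v‖ = 1) ∧ g ∈ interior (convexHull ℝ (s : Set E3)) := by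
  classical
  have hb : Metric.closedBall (0 : E3) 1 ∈ 𝓝 g := by
    refine mem_of_superset (Metric.isOpen_ball.mem_nhds ?_) Metric.ball_subset_closedBall
    simpa using hg
  obtain ⟨b, hb1, hb2⟩ := exists_mem_interior_convexHull_affineBasis hb
  have hi : ∀ i, ∃ t : Finset E3, (t : Set E3) ⊆ Metric.sphere 0 1 ∧ b i ∈ convexHull ℝ (t : Set E3) := by
    intro i
    have h1 : b i ∈ convexHull ℝ (Metric.sphere (0 : E3) 1) := by
      rw [convexHull_sphere_eq_closedBall _ zero_le_one]
      exact hb2 (subset_convexHull ℝ _ (mem_range_self i))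
    rw [convexHull_eq_union_convexHull_finite_subsets] at h1
    simp only [mem_iUnion] at h1
    obtain ⟨t, ht, h⟩ := h1
    exact ⟨t, ht, h⟩
  choose t ht hbt using hi
  refine ⟨Finset.univ.biUnion t, ?_, ?_⟩
  · intro v hv
    simp only [Finset.mem_biUnion, Finset.mem_univ, true_and] at hv
    obtain ⟨i, hi⟩ := hv
    simpa using ht i hi
  · refine interior_mono ?_ hb1
    refine convexHull_min ?_ (convex_convexHull ℝ _)
    rintro _ ⟨i, rfl⟩
    refine convexHull_mono ?_ (hbt i)
    exact_mod_cast Finset.subset_biUnion_of_mem t (Finset.mem_univ i)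

theorem reach_final (M : Matrix (Fin 3) (Fin 3) ℝ) (hM : M ∈ SO3) (g : E3) (hg : ‖g‖ < 1) :
    Reach 1 M (fun j => g j) := by
  obtain ⟨s, hs, hgs⟩ := exists_finset g hg
  choose Q hQ hQv using exists_frame
  obtain ⟨T0, hT0, W, h⟩ := reach_waits Q hQ s M hM
  set W' : E3 := WithLp.toLp 2 W with hW'
  have hcont : ContinuousAt (fun ε : ℝ => (1 - ε * T0)⁻¹ • (g - ε • W')) 0 := by
    have c1 : ContinuousAt (fun ε : ℝ => 1 - ε * T0) 0 := by fun_prop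
    have c2 : ContinuousAt (fun ε : ℝ => g - ε • W') 0 := by fun_prop
    exact (c1.inv₀ (by simp)).smul c2
  have hev : ∀ᶠ ε in 𝓝[>] (0:ℝ), (1 - ε * T0)⁻¹ • (g - ε • W') ∈
      interior (convexHull ℝ (s : Set E3)) := by
    refine (hcont.eventually (isOpen_interior.mem_nhds ?_)).filter_mono nhdsWithin_le_nhds
    simpa using hgs
  have hev2 : ∀ᶠ ε in 𝓝[>] (0:ℝ), ε * T0 < 1 := by
    have : ContinuousAt (fun ε : ℝ => ε * T0) 0 := by fun_prop
    exact (this.eventually (gt_mem_nhds (by simp))).filter_mono nhdsWithin_le_nhds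
  obtain ⟨ε, ⟨h1, h2⟩, hε⟩ := ((hev.and hev2).and self_mem_nhdsWithin).exists
  have hε : 0 < ε := hε
  have hu : 0 < 1 - ε * T0 := by linarith
  obtain ⟨w, hw0, hw1, hw⟩ := Finset.mem_convexHull'.mp (interior_subset h1)
  set c : E3 → ℝ := fun v => if v ∈ s then (1 - ε * T0) * w v else 0 with hc
  have hc0 : ∀ v, 0 ≤ c v := by
    intro v
    simp only [hc]
    split_ifs with hv
    · exact mul_nonneg hu.le (hw0 v hv)
    · exact le_rfl
  have hcs : ∀ v ∈ s, c v = (1 - ε * T0) * w v := fun v hv => by simp [hc, hv]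
  have hR := (h (fun v => c v / ε) (fun v => div_nonneg (hc0 v) hε.le)).scale hε
  convert hR using 1
  · rw [← Finset.sum_div, Finset.sum_congr rfl hcs, ← Finset.mul_sum, hw1]
    field_simp
    ring
  · funext j
    have e1 : g = ε • W' + (1 - ε * T0) • ∑ v ∈ s, w v • v := by
      rw [hw, smul_inv_smul₀ hu.ne']; abel
    have e2 := congrArg (fun x : E3 => x j) e1
    have e3 : (∑ v ∈ s, w v • v) j = ∑ v ∈ s, w v * v j := by
      simp
    simp only [PiLp.add_apply, PiLp.smul_apply, smul_eq_mul, e3] at e2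
    rw [e2, mul_add, Finset.mul_sum, Finset.mul_sum]
    congr 1
    refine Finset.sum_congr rfl fun v hv => ?_
    rw [hcs v hv, hQv v (hs v hv) j]
    field_simp

theorem hasDerivAt_E3 {f : ℝ → E3} {f' : E3} {t : ℝ}
    (h : ∀ i, HasDerivAt (fun t => f t i) (f' i) t) : HasDerivAt f f' t :=
  (PiLp.continuousLinearEquiv 2 ℝ (fun _ : Fin 3 => ℝ)).symm.hasFDerivAt.comp_hasDerivAt t
    (hasDerivAt_pi.2 h)

theorem genA_row0 (k a : ℝ) (N : Matrix (Fin 3) (Fin 3) ℝ) :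
    row3 (a • (genA k * N)) 0 = (a * Real.cos k) • row3 N 2 := by
  ext j
  have : (genA k * N) 0 j = Real.cos k * N 2 j := by
    rw [Matrix.mul_apply, Fin.sum_univ_three]; simp [genA]
  change a * (genA k * N) 0 j = a * Real.cos k * N 2 j
  rw [this]; ring

theorem genA_row2 (k a : ℝ) (N : Matrix (Fin 3) (Fin 3) ℝ) :
    row3 (a • (genA k * N)) 2 =
      (-a) • (Real.cos k • row3 N 0 + Real.sin k • row3 N 1) := by
  ext j
  have : (genA k * N) 2 j = -(Real.cos k * N 0 j) - Real.sin k * N 1 j := by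
    rw [Matrix.mul_apply, Fin.sum_univ_three]; simp [genA]; ring
  change a * (genA k * N) 2 j = -a * (Real.cos k * N 0 j + Real.sin k * N 1 j)
  rw [this]; ring

theorem cross3_rows {N : Matrix (Fin 3) (Fin 3) ℝ} (hN : N ∈ SO3) :
    cross3 (row3 N 2) (row3 N 0) = row3 N 1 := by
  have h1 : N.adjugate = Nᵀ := by
    have h2 : N * N.adjugate = 1 := by rw [Matrix.mul_adjugate, hN.2, one_smul]
    calc N.adjugate = Nᵀ * N * N.adjugate := by rw [SO3_tr hN, Matrix.one_mul]
      _ = Nᵀ := by rw [Matrix.mul_assoc, h2, Matrix.mul_one]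
  rw [Matrix.adjugate_fin_three] at h1
  ext j
  have := congrFun (congrFun h1 j) 1
  fin_cases j <;> simp [cross3, row3] at this ⊢ <;> linarith

theorem cross3_smul_self (a : ℝ) (v : E3) : cross3 (a • v) v = 0 := by
  ext j
  fin_cases j <;> simp [cross3] <;> ring

theorem inner_rows {N : Matrix (Fin 3) (Fin 3) ℝ} (hN : N ∈ SO3) :
    ⟪row3 N 2, row3 N 1⟫ = 0 := by
  have h12 := congrFun (congrFun hN.1 2) 1
  simp [Matrix.mul_apply, Fin.sum_univ_three] at h12
  simp [row3, PiLp.inner_apply, Fin.sum_univ_three]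
  linarith

/-- Framed curves for finite ribbons: for all `r̄ ∈ SO(3)` and `γ̄` with
`|γ̄| < 1` there is a smooth framed curve `(γ, r)` with `γ' = r₁`, `r₁'·r₂ ≡ 0`, satisfying the
clamped boundary conditions `r(0) = Id`, `r(1) = r̄`, `γ(0) = 0`, `γ(1) = γ̄`, and such that
there exists `K_g ∈ C₀^∞(I)` with `|K_g| ≤ π/4` for which
`r̃₁ = cos(K_g) r₁ + sin(K_g) (r₃ × r₁)` satisfies `r₃' × r̃₁ = 0` (an adapted frame for the
spherical curve `r₃`). -/
theorem statement17
    (rbar : Matrix (Fin 3) (Fin 3) ℝ) (hrbar : rbar ∈ SO3)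
    (γbar : E3) (hγ : ‖γbar‖ < 1) :
    ∃ (γ : ℝ → E3) (r : ℝ → Matrix (Fin 3) (Fin 3) ℝ),
      ContDiff ℝ (⊤ : ℕ∞) γ ∧ (∀ i : Fin 3, ContDiff ℝ (⊤ : ℕ∞) (fun t => row3 (r t) i)) ∧
      (∀ t ∈ Set.Icc (0:ℝ) 1, r t ∈ SO3) ∧
      (∀ t ∈ Set.Icc (0:ℝ) 1, deriv γ t = row3 (r t) 0) ∧
      (∀ t ∈ Set.Icc (0:ℝ) 1, ⟪deriv (fun s => row3 (r s) 0) t, row3 (r t) 1⟫ = 0) ∧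
      r 0 = 1 ∧ r 1 = rbar ∧ γ 0 = 0 ∧ γ 1 = γbar ∧
      ∃ Kg : ℝ → ℝ, ContDiff ℝ (⊤ : ℕ∞) Kg ∧ HasCompactSupport Kg ∧
        tsupport Kg ⊆ Set.Ioo 0 1 ∧
        (∀ t, |Kg t| ≤ Real.pi / 4) ∧
        (∀ t ∈ Set.Icc (0:ℝ) 1,
          cross3 (deriv (fun s => row3 (r s) 2) t)
            (Real.cos (Kg t) • row3 (r t) 0 +
              Real.sin (Kg t) • cross3 (row3 (r t) 2) (row3 (r t) 0)) = 0) := by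
  obtain ⟨r, hr, hM, hD⟩ := reach_final rbar hrbar γbar hγ
  obtain ⟨δ, hδ, K, l, hK, hK0, hK1, hKb, hl0, hl1, hd⟩ := hr.ex
  have hrow : ∀ i t, HasDerivAt (fun s => row3 (r s) i) (row3 (l t • (genA (K t) * r t)) i) t :=
    fun i t => hasDerivAt_E3 fun j => hd t i j
  set γ : ℝ → E3 := fun t => WithLp.toLp 2 (fun j => ∫ s in (0:ℝ)..t, r s 0 j) with hγdef
  have hγd : ∀ t, HasDerivAt γ (row3 (r t) 0) t := fun t => hasDerivAt_E3 fun j =>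
    (hr.sm 0 j).continuous.integral_hasStrictDerivAt 0 t |>.hasDerivAt
  have hrsm : ∀ i : Fin 3, ContDiff ℝ (⊤ : ℕ∞) (fun t => row3 (r t) i) := fun i =>
    contDiff_euclidean.2 fun j => hr.sm i j
  have hsupp : tsupport K ⊆ Set.Icc δ (1 - δ) := by
    refine closure_minimal ?_ isClosed_Icc
    intro t ht
    by_contra hn
    rw [Set.mem_Icc, not_and_or] at hn
    rcases hn with hn | hn
    · exact ht (hK0 t (not_le.mp hn))
    · exact ht (hK1 t (not_le.mp hn))
  refine ⟨γ, r, ?_, hrsm, fun t _ => hr.so t, fun t _ => (hγd t).deriv, ?_, hr.left 0 le_rfl, hM,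
    ?_, ?_, K, hK, ?_, ?_, hKb, ?_⟩
  · rw [contDiff_infty_iff_deriv]
    refine ⟨fun t => (hγd t).differentiableAt, ?_⟩
    rw [show deriv γ = fun t => row3 (r t) 0 from funext fun t => (hγd t).deriv]
    exact hrsm 0
  · intro t _
    rw [(hrow 0 t).deriv]
    rw [genA_row0, inner_smul_left, inner_rows (hr.so t), mul_zero]
  · ext j; simp [hγdef]
  · ext j; simp [hγdef, hD]
  · exact HasCompactSupport.of_support_subset_isCompact isCompact_Icc
      ((subset_tsupport K).trans hsupp)
  · exact hsupp.trans fun t ht => ⟨by linarith [ht.1], by linarith [ht.2]⟩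
  · intro t _
    rw [(hrow 2 t).deriv]
    rw [cross3_rows (hr.so t), genA_row2, cross3_smul_self]
end
end
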